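/- arXiv:1210.8390 — 6 statements merged into one kernel-verified Lean document; each statement's English description precedes it below -/
import Mathlib

section
/- Let n and r be positive integers, and let g = (t_1(n,r), t_2(n,r), …, t_n(n,r)) ∈ ℝ^n be the clique vector of the Turán graph T(n,r). Then the convex hull of the set of f-vectors (f_1(Δ), f_2(Δ), …, f_n(Δ)) ∈ ℝ^n of all r-colorable simplicial complexes Δ on n vertices is equal to the convex hull of the set of truncations {g^1, g^2, …, g^n} of g. -/
/-- The number of `k`-cliques of a graph `G`. -/
noncomputable def cliqueCount {V : Type*} (G : SimpleGraph V) (k : ℕ) : ℕ :=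
  {s : Finset V | G.IsNClique k s}.ncard

/-- `t_k(n,r)`: the number of `k`-cliques of the Turán graph `T(n,r)`. -/
noncomputable def turanCount (n r k : ℕ) : ℕ :=
  cliqueCount (SimpleGraph.turanGraph n r) k

/-- A (finite) simplicial complex on the vertex set `V`: a collection of subsets of `V`
closed under taking subsets and containing every singleton. -/
def IsComplex {V : Type*} [DecidableEq V] (Δ : Finset (Finset V)) : Prop :=
  (∀ F ∈ Δ, ∀ G ⊆ F, G ∈ Δ) ∧ (∀ v : V, {v} ∈ Δ)

/-- `f_k(Δ)`: the number of faces of `Δ` of cardinality `k`. -/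
def faceCount {V : Type*} [DecidableEq V] (Δ : Finset (Finset V)) (k : ℕ) : ℕ :=
  (Δ.filter fun F => F.card = k).card

/-- The underlying graph of a simplicial complex `Δ`: its edges are the
`2`-element faces of `Δ`. -/
def underlyingGraph {V : Type*} [DecidableEq V] (Δ : Finset (Finset V)) :
    SimpleGraph V where
  Adj x y := x ≠ y ∧ ({x, y} : Finset V) ∈ Δ
  symm := ⟨fun x y ⟨h1, h2⟩ => ⟨h1.symm, by rwa [Finset.pair_comm]⟩⟩
  loopless := ⟨fun x ⟨h, _⟩ => h rfl⟩

/-- The `k`-truncation of a vector `g ∈ ℝ^n` (coordinates numbered `1, …, n`). -/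
def trunc {n : ℕ} (g : Fin n → ℝ) (k : ℕ) : Fin n → ℝ :=
  fun i => if (i : ℕ) + 1 ≤ k then g i else 0

/-!
Sort the faces of an `r`-colored complex by their color sets `S`. Deleting a vertex shows that the
density of the faces among all transversals of the color classes in `S` decreases in `S`, so
`f_k(Δ)` is the `k`-th elementary symmetric polynomial in the class sizes with its monomials
weighted by a decreasing function of `S`. For such weights the quotient by the unweighted polynomial
decreases in `k`. Equalizing the class sizes one unit at a time raises the unweighted polynomials,
and again the quotient old/new is nonincreasing, because the old polynomial is a weighted version of
the new one. For class sizes as equal as possible the unweighted polynomial is `t_k(n,r)`, so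
`f_k(Δ) / t_k(n,r)` is nonincreasing in `k` and starts at `1`; summation by parts then writes the
`f`-vector as a convex combination of truncations. Conversely, `g^k` is the `f`-vector of the
complex of cliques of `T(n,r)` with at most `k` vertices.
-/

open Finset

section RatioAntitone

variable {K : Type*} [Field K] [LinearOrder K] [IsStrictOrderedRing K]

/-- The quotient `u k / v k` of two sequences is nonnegative and nonincreasing in `k`. Stating this
through a multiplier `q` leaves the quotient free where `v` vanishes, which makes the relation
transitive. -/
def RatioAntitone (u v : ℕ → K) : Prop :=
  ∃ q : ℕ → K, Antitone q ∧ 0 ≤ q ∧ u = q * v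

theorem RatioAntitone.refl (u : ℕ → K) : RatioAntitone u u :=
  ⟨1, antitone_const, zero_le_one, (one_mul u).symm⟩

theorem RatioAntitone.trans {u v w : ℕ → K} (huv : RatioAntitone u v) (hvw : RatioAntitone v w) :
    RatioAntitone u w := by
  obtain ⟨q, hq, hq0, rfl⟩ := huv
  obtain ⟨q', hq', hq'0, rfl⟩ := hvw
  exact ⟨q * q', fun k l hkl => mul_le_mul (hq hkl) (hq' hkl) (hq'0 l) (hq0 k),
    mul_nonneg hq0 hq'0, (mul_assoc q q' w).symm⟩

theorem RatioAntitone.of_mul_le_mul {u v : ℕ → K} (hu : 0 ≤ u) (hv : 0 ≤ v)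
    (huv : ∀ k, v k = 0 → u k = 0) (hv_succ : ∀ k, v k = 0 → v (k + 1) = 0)
    (h : ∀ k, u (k + 1) * v k ≤ u k * v (k + 1)) : RatioAntitone u v := by
  have hq0 : 0 ≤ u / v := fun k => div_nonneg (hu k) (hv k)
  refine ⟨u / v, antitone_nat_of_succ_le fun k => ?_, hq0,
    funext fun k => (div_mul_cancel_of_imp (huv k)).symm⟩
  have hv_nonneg : 0 ≤ v (k + 1) := hv (k + 1)
  rcases hv_nonneg.eq_or_lt' with hv1 | hv1
  · have : 0 ≤ u k / v k := hq0 k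
    simpa only [Pi.div_apply, hv1, div_zero] using this
  · have hvk : 0 < v k := (hv k).lt_of_ne' fun hvk => hv1.ne' (hv_succ k hvk)
    exact (div_le_div_iff₀ hv1 hvk).2 (h k)

/-- Summation by parts: the coefficient of `trunc g (k + 1)` is `q k - q (k + 1)`, where `q` is cut
off to `0` from index `n` on. -/
theorem mul_mem_convexHull_trunc {n : ℕ} (hn : 0 < n) (g : Fin n → ℝ) {q : ℕ → ℝ}
    (hq : Antitone q) (hq_nonneg : 0 ≤ q) (hq_zero : q 0 = 1) :
    (fun i : Fin n => q i * g i) ∈ convexHull ℝ {x | ∃ k, 1 ≤ k ∧ k ≤ n ∧ x = trunc g k} := by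
  set p : ℕ → ℝ := fun k => if k < n then q k else 0 with hp
  have hp_anti : Antitone p := by
    intro k l hkl
    simp only [hp]
    split_ifs with hl hk hk
    · exact hq hkl
    · omega
    · exact hq_nonneg k
    · exact le_rfl
  have hp_zero : p 0 = 1 := by simp [hp, hn, hq_zero]
  have hp_n : p n = 0 := by simp [hp]
  have hcomb : (fun i : Fin n => q i * g i) =
      ∑ k ∈ range n, (p k - p (k + 1)) • trunc g (k + 1) := by
    ext i
    have hfilter : (range n).filter (fun k => (i : ℕ) ≤ k) = Ico (i : ℕ) n := by
      ext k
      simp [and_comm]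
    calc q i * g i = (p i - p n) * g i := by simp [hp]
      _ = (∑ k ∈ Ico (i : ℕ) n, (p k - p (k + 1))) * g i := by
          rw [← neg_sub, ← sum_Ico_sub p i.2.le, ← sum_neg_distrib]
          simp only [neg_sub]
      _ = (∑ k ∈ range n, (p k - p (k + 1)) • trunc g (k + 1)) i := by
          rw [sum_mul, ← hfilter, sum_filter]
          simp [trunc, Finset.sum_apply]
  rw [hcomb]
  refine (convex_convexHull ℝ _).sum_mem (fun k _ => sub_nonneg.2 (hp_anti k.le_succ)) ?_
    fun k hk => subset_convexHull ℝ _ ⟨k + 1, by omega, mem_range.1 hk, rfl⟩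
  rw [sum_range_sub', hp_zero, hp_n, sub_zero]

theorem RatioAntitone.mem_convexHull_trunc {n : ℕ} (hn : 0 < n) {u v : ℕ → ℝ}
    (h : RatioAntitone u v) (huv : u 1 = v 1) (hv : v 1 ≠ 0) :
    (fun i : Fin n => u (i + 1)) ∈
      convexHull ℝ {x | ∃ k, 1 ≤ k ∧ k ≤ n ∧ x = trunc (fun i : Fin n => v (i + 1)) k} := by
  obtain ⟨q, hq, hq_nonneg, rfl⟩ := h
  exact mul_mem_convexHull_trunc hn _ (q := fun k => q (k + 1))
    (fun k l hkl => hq (Nat.succ_le_succ hkl)) (fun k => hq_nonneg (k + 1))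
    ((mul_eq_right₀ hv).1 huv)

end RatioAntitone

section WeightedEsymm

variable {ι R : Type*} [CommSemiring R]

/-- The elementary symmetric polynomial of degree `k` in the variables `x i`, `i ∈ s`, with the
monomial `∏ i ∈ S, x i` given the coefficient `φ S`. The elementary symmetric polynomial itself is
the case `φ = 1`, called `esymm` in lemma names. -/
def weightedEsymm (s : Finset ι) (x : ι → R) (φ : Finset ι → R) (k : ℕ) : R :=
  ∑ S ∈ s.powersetCard k, φ S * ∏ i ∈ S, x i

variable {s : Finset ι} {x y : ι → R} {φ ψ : Finset ι → R}

theorem weightedEsymm_zero : weightedEsymm s x φ 0 = φ ∅ := by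
  simp [weightedEsymm]

theorem weightedEsymm_one : weightedEsymm s x φ 1 = ∑ i ∈ s, φ {i} * x i := by
  simp [weightedEsymm, powersetCard_one]

theorem weightedEsymm_congr (hxy : ∀ i ∈ s, x i = y i) (hφψ : ∀ S ⊆ s, φ S = ψ S) :
    weightedEsymm s x φ = weightedEsymm s y ψ := by
  funext k
  refine sum_congr rfl fun S hS => ?_
  have hSs := (mem_powersetCard.1 hS).1
  rw [hφψ S hSs, prod_congr rfl fun i hi => hxy i (hSs hi)]

variable [DecidableEq ι]

theorem weightedEsymm_insert_succ {a : ι} (ha : a ∉ s) (k : ℕ) :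
    weightedEsymm (insert a s) x φ (k + 1) =
      weightedEsymm s x φ (k + 1) + x a * weightedEsymm s x (φ ∘ insert a) k := by
  have ha_mem : ∀ {l} {S}, S ∈ s.powersetCard l → a ∉ S := fun hS haS =>
    ha ((mem_powersetCard.1 hS).1 haS)
  have hdisj : Disjoint (s.powersetCard (k + 1)) ((s.powersetCard k).image (insert a)) := by
    refine disjoint_left.2 fun S hS hS' => ?_
    obtain ⟨T, -, rfl⟩ := mem_image.1 hS'
    exact ha_mem hS (mem_insert_self a T)
  have hinj : Set.InjOn (insert a) (s.powersetCard k : Set (Finset ι)) := fun S hS T hT h => by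
    rw [← erase_insert (ha_mem hS), h, erase_insert (ha_mem hT)]
  rw [weightedEsymm, powersetCard_succ_insert ha, sum_union hdisj, sum_image hinj, weightedEsymm,
    weightedEsymm, mul_sum]
  congr 1
  refine sum_congr rfl fun S hS => ?_
  rw [prod_insert (ha_mem hS), Function.comp_apply, mul_left_comm]

theorem weightedEsymm_insert_insert_ite {a b : ι} (hab : a ≠ b) (ha : a ∉ s) (hb : b ∉ s) (ρ : R)
    (k : ℕ) :
    weightedEsymm (insert a (insert b s)) x (fun S => if a ∈ S ∧ b ∈ S then ρ else 1) (k + 2) =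
      weightedEsymm s x 1 (k + 2) + (x a + x b) * weightedEsymm s x 1 (k + 1) +
        x a * x b * ρ * weightedEsymm s x 1 k := by
  have ha' : a ∉ insert b s := by simp [hab, ha]
  set φ : Finset ι → R := fun S => if a ∈ S ∧ b ∈ S then ρ else 1
  have h_none : weightedEsymm s x φ = weightedEsymm s x 1 :=
    weightedEsymm_congr (fun _ _ => rfl) fun S hS => if_neg fun h => ha (hS h.1)
  have h_a : weightedEsymm s x (φ ∘ insert a) = weightedEsymm s x 1 :=
    weightedEsymm_congr (fun _ _ => rfl) fun S hS => if_neg (by grind)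
  have h_b : weightedEsymm s x (φ ∘ insert b) = weightedEsymm s x 1 :=
    weightedEsymm_congr (fun _ _ => rfl) fun S hS => if_neg (by grind)
  have h_both : weightedEsymm s x ((φ ∘ insert a) ∘ insert b) k = ρ * weightedEsymm s x 1 k := by
    rw [weightedEsymm, weightedEsymm, mul_sum]
    refine sum_congr rfl fun S _ => ?_
    simp [φ]
  rw [weightedEsymm_insert_succ ha', weightedEsymm_insert_succ hb, weightedEsymm_insert_succ hb,
    h_none, h_a, h_b, h_both]
  ring

theorem esymm_eq_weightedEsymm_ite {a b : ι} (hab : a ≠ b) (ha : a ∉ s) (hb : b ∉ s)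
    (hxy : ∀ i ∈ s, x i = y i) (hsum : x a + x b = y a + y b) {ρ : R}
    (hρ : y a * y b * ρ = x a * x b) :
    weightedEsymm (insert a (insert b s)) x 1 =
      weightedEsymm (insert a (insert b s)) y fun S => if a ∈ S ∧ b ∈ S then ρ else 1 := by
  have hesymm : weightedEsymm s x 1 = weightedEsymm s y 1 := weightedEsymm_congr hxy fun _ _ => rfl
  have hone : (1 : Finset ι → R) = fun S => if a ∈ S ∧ b ∈ S then 1 else 1 :=
    funext fun S => (ite_self _).symm
  funext k
  match k with
  | 0 => simp [weightedEsymm_zero]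
  | 1 =>
    have ha' : a ∉ insert b s := by simp [hab, ha]
    have hsingle (i : ι) : ¬(a ∈ ({i} : Finset ι) ∧ b ∈ ({i} : Finset ι)) := by grind
    simp only [weightedEsymm_one, if_neg (hsingle _), Pi.one_apply, one_mul, sum_insert ha',
      sum_insert hb, sum_congr rfl hxy]
    rw [← add_assoc, hsum, add_assoc]
  | k + 2 =>
    rw [hone, weightedEsymm_insert_insert_ite hab ha hb,
      weightedEsymm_insert_insert_ite hab ha hb, hesymm, hsum, hρ, mul_one]

end WeightedEsymm

section WeightedEsymmOrder

variable {ι K : Type*} [Field K] [LinearOrder K] [IsStrictOrderedRing K]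
  {s : Finset ι} {x y : ι → K} {φ : Finset ι → K}

theorem weightedEsymm_nonneg (hx : 0 ≤ x) (hφ : 0 ≤ φ) : 0 ≤ weightedEsymm s x φ :=
  fun _ => sum_nonneg fun S _ => mul_nonneg (hφ S) (prod_nonneg fun i _ => hx i)

theorem weightedEsymm_le_mul (hx : 0 ≤ x) (hφ_anti : Antitone φ) (k : ℕ) :
    weightedEsymm s x φ k ≤ φ ∅ * weightedEsymm s x 1 k := by
  simp only [weightedEsymm, Pi.one_apply, one_mul, mul_sum]
  exact sum_le_sum fun S _ =>
    mul_le_mul_of_nonneg_right (hφ_anti (empty_subset S)) (prod_nonneg fun i _ => hx i)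

theorem sum_powersetCard_exchange [DecidableEq ι] {M : Type*} [AddCommMonoid M]
    (s : Finset ι) (p q : ℕ) (H : Finset ι → Finset ι → ι → M) :
    ∑ t ∈ s.powersetCard (p + 1) ×ˢ s.powersetCard q, ∑ a ∈ t.1 \ t.2,
        H (t.1.erase a) (insert a t.2) a =
      ∑ t ∈ s.powersetCard p ×ˢ s.powersetCard (q + 1), ∑ a ∈ t.2 \ t.1, H t.1 t.2 a := by
  rw [sum_sigma', sum_sigma']
  refine sum_nbij' (fun t => ⟨(t.1.1.erase t.2, insert t.2 t.1.2), t.2⟩)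
    (fun t => ⟨(insert t.2 t.1.1, t.1.2.erase t.2), t.2⟩) ?_ ?_ ?_ ?_ fun _ _ => rfl
  all_goals
    rintro ⟨⟨A, B⟩, a⟩ h
    simp only [mem_sigma, mem_product, mem_powersetCard, mem_sdiff] at h ⊢
  · grind
  · grind
  · rw [insert_erase h.2.1, erase_insert h.2.2]
  · rw [insert_erase h.2.1, erase_insert h.2.2]

/-- Each pair `(A, B)` spreads its weight evenly over the pairs obtained by moving one element of
`A \ B` to `B`; no target receives more than its own weight because `#A > #B`. -/
theorem sum_powersetCard_exchange_le [DecidableEq ι] (s : Finset ι) {p q : ℕ} (hqp : q ≤ p)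
    {G : Finset ι → Finset ι → K} (hG_nonneg : ∀ A B, 0 ≤ G A B)
    (hG : ∀ A B, ∀ a ∈ A \ B, G A B ≤ G (A.erase a) (insert a B)) :
    ∑ A ∈ s.powersetCard (p + 1), ∑ B ∈ s.powersetCard q, G A B ≤
      ∑ A ∈ s.powersetCard p, ∑ B ∈ s.powersetCard (q + 1), G A B := by
  have hcard : ∀ t ∈ s.powersetCard (p + 1) ×ˢ s.powersetCard q, #(t.2 \ t.1) < #(t.1 \ t.2) := by
    intro t ht
    simp only [mem_product, mem_powersetCard] at ht
    have h₁ := card_sdiff_add_card t.1 t.2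
    have h₂ := card_sdiff_add_card t.2 t.1
    rw [union_comm] at h₂
    omega
  simp only [← sum_product']
  calc ∑ t ∈ s.powersetCard (p + 1) ×ˢ s.powersetCard q, G t.1 t.2
      = ∑ t ∈ s.powersetCard (p + 1) ×ˢ s.powersetCard q,
          ∑ _a ∈ t.1 \ t.2, G t.1 t.2 / #(t.1 \ t.2) := by
        refine sum_congr rfl fun t ht => ?_
        have : (#(t.1 \ t.2) : K) ≠ 0 := by exact_mod_cast (Nat.zero_lt_of_lt (hcard t ht)).ne'
        rw [sum_const, nsmul_eq_mul, mul_div_cancel₀ _ this]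
    _ ≤ ∑ t ∈ s.powersetCard (p + 1) ×ˢ s.powersetCard q, ∑ a ∈ t.1 \ t.2,
          G (t.1.erase a) (insert a t.2) / #(insert a t.2 \ t.1.erase a) := by
        refine sum_le_sum fun t ht => sum_le_sum fun a ha => ?_
        have hdiff : insert a t.2 \ t.1.erase a = insert a (t.2 \ t.1) := by grind
        have hle : #(insert a t.2 \ t.1.erase a) ≤ #(t.1 \ t.2) :=
          hdiff ▸ (card_insert_le a _).trans (hcard t ht)
        have hpos : 0 < #(insert a t.2 \ t.1.erase a) := by simp [hdiff]
        have := hG t.1 t.2 a ha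
        have := hG_nonneg (t.1.erase a) (insert a t.2)
        gcongr
    _ = ∑ t ∈ s.powersetCard p ×ˢ s.powersetCard (q + 1),
          ∑ _a ∈ t.2 \ t.1, G t.1 t.2 / #(t.2 \ t.1) :=
        sum_powersetCard_exchange s p q fun A B _ => G A B / #(B \ A)
    _ ≤ ∑ t ∈ s.powersetCard p ×ˢ s.powersetCard (q + 1), G t.1 t.2 := by
        refine sum_le_sum fun t _ => ?_
        rw [sum_const, nsmul_eq_mul, mul_div_left_comm]
        exact mul_le_of_le_one_right (hG_nonneg _ _) (div_self_le_one _)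

theorem weightedEsymm_succ_mul_le (hx : 0 ≤ x) (hφ : 0 ≤ φ) (hφ_anti : Antitone φ) {p q : ℕ}
    (hqp : q ≤ p) :
    weightedEsymm s x φ (p + 1) * weightedEsymm s x 1 q ≤
      weightedEsymm s x φ p * weightedEsymm s x 1 (q + 1) := by
  classical
  have hprod : ∀ S : Finset ι, 0 ≤ ∏ i ∈ S, x i := fun S => prod_nonneg fun i _ => hx i
  simp only [weightedEsymm, sum_mul_sum, Pi.one_apply, one_mul]
  refine sum_powersetCard_exchange_le s hqp
    (fun A B => mul_nonneg (mul_nonneg (hφ A) (hprod A)) (hprod B)) fun A B a ha => ?_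
  obtain ⟨haA, haB⟩ := mem_sdiff.1 ha
  calc φ A * (∏ i ∈ A, x i) * ∏ i ∈ B, x i
      = φ A * ((∏ i ∈ A.erase a, x i) * ∏ i ∈ insert a B, x i) := by
        rw [← mul_prod_erase A x haA, prod_insert haB]
        ring
    _ ≤ φ (A.erase a) * ((∏ i ∈ A.erase a, x i) * ∏ i ∈ insert a B, x i) :=
        mul_le_mul_of_nonneg_right (hφ_anti (erase_subset a A)) (mul_nonneg (hprod _) (hprod _))
    _ = _ := (mul_assoc _ _ _).symm

theorem ratioAntitone_weightedEsymm (hx : 0 ≤ x) (hφ : 0 ≤ φ) (hφ_anti : Antitone φ) :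
    RatioAntitone (weightedEsymm s x φ) (weightedEsymm s x 1) := by
  have he : 0 ≤ weightedEsymm s x 1 := weightedEsymm_nonneg hx zero_le_one
  have hf : 0 ≤ weightedEsymm s x φ := weightedEsymm_nonneg hx hφ
  refine .of_mul_le_mul hf he (fun k hk => ?_) (fun k hk => ?_) fun k =>
    weightedEsymm_succ_mul_le hx hφ hφ_anti le_rfl
  · have := weightedEsymm_le_mul (s := s) hx hφ_anti k
    rw [hk, mul_zero] at this
    exact this.antisymm (hf k)
  · refine le_antisymm ?_ (he (k + 1))
    calc weightedEsymm s x 1 (k + 1)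
        = weightedEsymm s x 1 (k + 1) * weightedEsymm s x 1 0 := by
          rw [weightedEsymm_zero, Pi.one_apply, mul_one]
      _ ≤ weightedEsymm s x 1 k * weightedEsymm s x 1 (0 + 1) :=
          weightedEsymm_succ_mul_le hx zero_le_one (antitone_const (c := (1 : K))) k.zero_le
      _ = 0 := by rw [hk, zero_mul]

/-- Only the monomials divisible by `x a * x b` change when `x a + x b` is kept and `x a * x b` is
raised, so the old polynomial is the new one with a smaller coefficient at these monomials. -/
theorem ratioAntitone_esymm_of_mul_le [DecidableEq ι] {a b : ι} (hab : a ≠ b) (ha : a ∉ s)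
    (hb : b ∉ s) (hx : 0 ≤ x) (hy : 0 ≤ y) (hxy : ∀ i ∈ s, x i = y i) (hsum : x a + x b = y a + y b)
    (hmul : x a * x b ≤ y a * y b) :
    RatioAntitone (weightedEsymm (insert a (insert b s)) x 1)
      (weightedEsymm (insert a (insert b s)) y 1) := by
  have hxab : 0 ≤ x a * x b := mul_nonneg (hx a) (hx b)
  have hyab : 0 ≤ y a * y b := mul_nonneg (hy a) (hy b)
  obtain ⟨ρ, hρ_nonneg, hρ_le, hρ⟩ : ∃ ρ : K, 0 ≤ ρ ∧ ρ ≤ 1 ∧ y a * y b * ρ = x a * x b :=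
    ⟨x a * x b / (y a * y b), div_nonneg hxab hyab, div_le_one_of_le₀ hmul hyab,
      mul_div_cancel_of_imp' fun h => (h ▸ hmul).antisymm hxab⟩
  rw [esymm_eq_weightedEsymm_ite hab ha hb hxy hsum hρ]
  refine ratioAntitone_weightedEsymm hy (fun S => ?_) fun S T hST => ?_
  · exact ite_nonneg hρ_nonneg zero_le_one
  · split_ifs <;> grind

end WeightedEsymmOrder

section Transfer

variable {ι : Type*} [Fintype ι]

/-- Moving units from indices where `x` exceeds `y` to indices where it falls short turns `x` into
the equitable `y`; equitability guarantees that each move goes from a larger to a smaller entry. -/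
theorem transfer_induction [DecidableEq ι] {y : ι → ℕ} (hy : Set.univ.EquitableOn y)
    {P : (ι → ℕ) → Prop}
    (step : ∀ (z : ι → ℕ) a b, a ≠ b → z b ≤ z a → P (z + Pi.single a 1) → P (z + Pi.single b 1))
    {x : ι → ℕ} (hx : ∑ i, x i = ∑ i, y i) (h : P x) : P y := by
  induction hd : ∑ i, (x i - y i) using Nat.strong_induction_on generalizing x with | _ d ih
  by_cases hle : ∀ i, x i ≤ y i
  · have hxy : x = y := funext fun i =>
      (sum_eq_sum_iff_of_le fun i _ => hle i).1 hx i (mem_univ i)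
    exact hxy ▸ h
  · push Not at hle
    obtain ⟨a, ha⟩ := hle
    obtain ⟨b, hb⟩ : ∃ b, x b < y b := by
      by_contra! hge
      exact (sum_lt_sum (fun i _ => hge i) ⟨a, mem_univ a, ha⟩).ne' hx
    have hab : a ≠ b := by rintro rfl; omega
    obtain ⟨z, rfl⟩ : ∃ z : ι → ℕ, x = z + Pi.single a 1 := by
      refine ⟨x - Pi.single a 1, (tsub_add_cancel_of_le fun i => ?_).symm⟩
      rw [Pi.single_apply]
      split_ifs <;> grind
    have hadd (c i : ι) : (z + Pi.single c 1 : ι → ℕ) i = z i + if i = c then 1 else 0 := by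
      rw [Pi.add_apply, Pi.single_apply]
    have hsum : ∑ i, (z + Pi.single b 1 : ι → ℕ) i = ∑ i, y i := by
      rw [← hx]
      simp only [hadd, sum_add_distrib, sum_ite_eq', mem_univ]
    have hy_ab := hy (Set.mem_univ b) (Set.mem_univ a)
    simp only [hadd] at ha hb hd
    simp only [if_neg hab.symm, if_true] at ha hb
    refine ih _ ?_ hsum (step z a b hab (by omega) h) rfl
    rw [← hd]
    simp only [hadd]
    exact sum_lt_sum (fun i _ => by grind) ⟨a, mem_univ a, by grind⟩

theorem ratioAntitone_esymm_of_equitableOn {K : Type*} [Field K] [LinearOrder K]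
    [IsStrictOrderedRing K] {x y : ι → ℕ}
    (hy : Set.univ.EquitableOn y) (hxy : ∑ i, x i = ∑ i, y i) :
    RatioAntitone (weightedEsymm univ (fun i => (x i : K)) 1)
      (weightedEsymm univ (fun i => (y i : K)) 1) := by
  classical
  refine transfer_induction (P := fun z => RatioAntitone (weightedEsymm univ (fun i => (x i : K)) 1)
    (weightedEsymm univ (fun i => (z i : K)) 1)) hy (fun z a b hab hz h => h.trans ?_) hxy
    (.refl _)
  have huniv : (univ : Finset ι) = insert a (insert b ((univ.erase a).erase b)) := by
    rw [insert_erase (by simp [hab.symm]), insert_erase (mem_univ a)]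
  rw [huniv]
  have hz' : (z b : K) ≤ z a := by exact_mod_cast hz
  refine ratioAntitone_esymm_of_mul_le hab (by simp) (by simp) (fun i => Nat.cast_nonneg _)
    (fun i => Nat.cast_nonneg _) (fun i hi => ?_) ?_ ?_
  · obtain ⟨hib, hi⟩ := mem_erase.1 hi
    simp [ne_of_mem_erase hi, hib]
  · simp only [Pi.add_apply, Pi.single_eq_same, Pi.single_eq_of_ne hab, Pi.single_eq_of_ne hab.symm]
    push_cast
    ring
  · simp only [Pi.add_apply, Pi.single_eq_same, Pi.single_eq_of_ne hab, Pi.single_eq_of_ne hab.symm]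
    push_cast
    linarith

end Transfer

section Colorings

variable {V ι : Type*} [DecidableEq ι] (c : V → ι)

/-- The faces of `Δ` whose set of colors is `S`. -/
def facesOver (Δ : Finset (Finset V)) (S : Finset ι) : Finset (Finset V) :=
  {F ∈ Δ | F.image c = S}

theorem notMem_of_mem_facesOver {c : V → ι} {Δ : Finset (Finset V)} {S : Finset ι}
    {v : V} {F : Finset V} (hv : c v ∉ S) (hF : F ∈ facesOver c Δ S) : v ∉ F := fun hvF =>
  hv ((mem_filter.1 hF).2 ▸ mem_image_of_mem c hvF)

variable [Fintype V]

/-- The number of vertices of color `i`. -/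
def classCard (i : ι) : ℕ :=
  #{v | c v = i}

/-- The sets of vertices of pairwise distinct colors. A complex is properly colored by `c` iff all
its faces are rainbow, so this is the largest properly colored complex. -/
def rainbowSets : Finset (Finset V) :=
  {F | #(F.image c) = #F}

/-- The proportion of the transversals of the color classes in `S` that are faces of `Δ`. -/
noncomputable def colorDensity (Δ : Finset (Finset V)) (S : Finset ι) : ℝ :=
  #(facesOver c Δ S) / ∏ i ∈ S, (classCard c i : ℝ)

variable {c} {Δ : Finset (Finset V)} {S : Finset ι} {i : ι}

theorem mem_rainbowSets {F : Finset V} : F ∈ rainbowSets c ↔ Set.InjOn c F := by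
  simp [rainbowSets, card_image_iff]

theorem isLowerSet_rainbowSets : IsLowerSet (rainbowSets c : Set (Finset V)) :=
  fun _ _ hGF hF => mem_rainbowSets.2 ((mem_rainbowSets.1 hF).mono (coe_subset.2 hGF))

theorem sum_classCard [Fintype ι] : ∑ i, classCard c i = Fintype.card V :=
  (card_eq_sum_card_fiberwise fun _ _ => mem_univ _).symm

theorem colorDensity_nonneg : 0 ≤ colorDensity c Δ := fun _ =>
  div_nonneg (Nat.cast_nonneg _) (prod_nonneg fun _ _ => Nat.cast_nonneg _)

theorem facesOver_insert_subset [DecidableEq V] (hΔ_lower : IsLowerSet (Δ : Set (Finset V)))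
    (hΔ : Δ ⊆ rainbowSets c) (hi : i ∉ S) :
    facesOver c Δ (insert i S) ⊆ image₂ insert ({v | c v = i} : Finset V) (facesOver c Δ S) := by
  intro F hF
  obtain ⟨hFΔ, himage⟩ := mem_filter.1 hF
  have hinj := mem_rainbowSets.1 (hΔ hFΔ)
  obtain ⟨v, hv, hvi⟩ := mem_image.1 (himage ▸ mem_insert_self i S)
  refine mem_image₂.2 ⟨v, by simpa using hvi, F.erase v,
    mem_filter.2 ⟨hΔ_lower (erase_subset v F) hFΔ, ?_⟩, insert_erase hv⟩
  have hv_erase : c v ∉ (F.erase v).image c := by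
    simp only [mem_image, mem_erase, not_exists, not_and]
    exact fun w hw hwv => hw.1 (hinj hw.2 hv hwv)
  rw [← erase_insert hv_erase, ← image_insert, insert_erase hv, himage, hvi, erase_insert hi]

theorem card_facesOver_insert_le (hΔ_lower : IsLowerSet (Δ : Set (Finset V)))
    (hΔ : Δ ⊆ rainbowSets c) (hi : i ∉ S) :
    #(facesOver c Δ (insert i S)) ≤ classCard c i * #(facesOver c Δ S) := by
  classical
  exact (card_le_card (facesOver_insert_subset hΔ_lower hΔ hi)).trans (card_image₂_le _ _ _)

theorem facesOver_rainbowSets_insert [DecidableEq V] (hi : i ∉ S) :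
    facesOver c (rainbowSets c) (insert i S) =
      image₂ insert ({v | c v = i} : Finset V) (facesOver c (rainbowSets c) S) := by
  refine (facesOver_insert_subset isLowerSet_rainbowSets Subset.rfl hi).antisymm fun F hF => ?_
  obtain ⟨v, hv, G, hG, rfl⟩ := mem_image₂.1 hF
  obtain rfl : c v = i := by simpa using hv
  obtain ⟨hG_rainbow, himage⟩ := mem_filter.1 hG
  refine mem_filter.2 ⟨mem_rainbowSets.2 ?_, by rw [image_insert, himage]⟩
  rw [coe_insert, Set.injOn_insert (notMem_of_mem_facesOver hi hG)]
  refine ⟨mem_rainbowSets.1 hG_rainbow, ?_⟩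
  rwa [← coe_image, himage, mem_coe]

theorem card_facesOver_rainbowSets (S : Finset ι) :
    #(facesOver c (rainbowSets c) S) = ∏ i ∈ S, classCard c i := by
  classical
  induction S using Finset.induction_on with
  | empty =>
    have : facesOver c (rainbowSets c) ∅ = {∅} := by
      ext F
      simp +contextual [facesOver, rainbowSets]
    simp [this]
  | insert i S hi ih =>
    rw [facesOver_rainbowSets_insert hi, card_image₂_iff.2 ?_, ih, prod_insert hi]
    · rfl
    rintro ⟨v, F⟩ hv ⟨w, G⟩ hw h
    simp only [coe_filter, mem_univ, true_and, Set.mem_prod, Set.mem_ofPred_eq, mem_coe] at hv hw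
    have hvF := notMem_of_mem_facesOver (hv.1 ▸ hi) hv.2
    have hvG := notMem_of_mem_facesOver (hv.1 ▸ hi) hw.2
    have hwG := notMem_of_mem_facesOver (hw.1 ▸ hi) hw.2
    change insert v F = insert w G at h
    obtain rfl : v = w := (mem_insert.1 (h ▸ mem_insert_self v F)).resolve_right hvG
    rw [← erase_insert hvF, ← erase_insert hwG]
    exact congrArg (fun H => (v, H.erase v)) h

theorem colorDensity_antitone (hΔ_lower : IsLowerSet (Δ : Set (Finset V)))
    (hΔ : Δ ⊆ rainbowSets c) : Antitone (colorDensity c Δ) := by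
  refine antitone_iff_forall_insert_le.2 fun S i hi => ?_
  have hle : (#(facesOver c Δ (insert i S)) : ℝ) ≤ classCard c i * #(facesOver c Δ S) := by
    exact_mod_cast card_facesOver_insert_le hΔ_lower hΔ hi
  calc colorDensity c Δ (insert i S)
      ≤ classCard c i * #(facesOver c Δ S) / (classCard c i * ∏ j ∈ S, (classCard c j : ℝ)) := by
        rw [colorDensity, prod_insert hi]
        gcongr
    _ ≤ colorDensity c Δ S := mul_div_mul_left_le (colorDensity_nonneg S)

theorem faceCount_eq_sum_card_facesOver [DecidableEq V] [Fintype ι] (hΔ : Δ ⊆ rainbowSets c)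
    (k : ℕ) : faceCount Δ k = ∑ S ∈ powersetCard k univ, #(facesOver c Δ S) := by
  have hcard {F : Finset V} (hF : F ∈ Δ) : #(F.image c) = #F :=
    card_image_iff.2 (mem_rainbowSets.1 (hΔ hF))
  rw [faceCount, card_eq_sum_card_fiberwise (f := fun F => F.image c) (t := powersetCard k univ)]
  · refine sum_congr rfl fun S hS => congrArg card ?_
    ext F
    have := (mem_powersetCard.1 hS).2
    simp only [facesOver, mem_filter]
    grind
  · intro F hF
    obtain ⟨hFΔ, rfl⟩ := mem_filter.1 hF
    exact mem_powersetCard.2 ⟨subset_univ _, hcard hFΔ⟩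

theorem faceCount_eq_weightedEsymm [DecidableEq V] [Fintype ι] (hΔ : Δ ⊆ rainbowSets c) :
    (fun k => (faceCount Δ k : ℝ)) =
      weightedEsymm univ (fun i => (classCard c i : ℝ)) (colorDensity c Δ) := by
  funext k
  rw [faceCount_eq_sum_card_facesOver hΔ, weightedEsymm, Nat.cast_sum]
  refine sum_congr rfl fun S _ => (div_mul_cancel_of_imp fun h => ?_).symm
  have hle : #(facesOver c Δ S) ≤ ∏ i ∈ S, classCard c i :=
    (card_le_card (filter_subset_filter _ hΔ)).trans_eq (card_facesOver_rainbowSets S)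
  have hprod : ∏ i ∈ S, classCard c i = 0 := by exact_mod_cast h
  rw [hprod, Nat.le_zero] at hle
  rw [hle, Nat.cast_zero]

theorem faceCount_rainbowSets [DecidableEq V] [Fintype ι] :
    (fun k => (faceCount (rainbowSets c) k : ℝ)) =
      weightedEsymm univ (fun i => (classCard c i : ℝ)) 1 := by
  funext k
  rw [faceCount_eq_sum_card_facesOver Subset.rfl, weightedEsymm, Nat.cast_sum]
  refine sum_congr rfl fun S _ => ?_
  rw [card_facesOver_rainbowSets, Nat.cast_prod, Pi.one_apply, one_mul]

end Colorings

section Complexes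

variable {V : Type*} {Δ : Finset (Finset V)}

/-- The `k`-skeleton of `Δ`, its faces counted by cardinality: those with at most `k` vertices. -/
def skeleton (Δ : Finset (Finset V)) (k : ℕ) : Finset (Finset V) :=
  {F ∈ Δ | #F ≤ k}

theorem skeleton_subset (Δ : Finset (Finset V)) (k : ℕ) : skeleton Δ k ⊆ Δ :=
  filter_subset _ _

variable [DecidableEq V]

theorem IsComplex.isLowerSet (hΔ : IsComplex Δ) : IsLowerSet (Δ : Set (Finset V)) :=
  fun F G hGF hF => hΔ.1 F hF G hGF

theorem IsComplex.skeleton (hΔ : IsComplex Δ) {k : ℕ} (hk : 1 ≤ k) : IsComplex (skeleton Δ k) :=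
  ⟨fun F hF G hGF =>
    have ⟨hFΔ, hFk⟩ := mem_filter.1 hF
    mem_filter.2 ⟨hΔ.1 F hFΔ G hGF, (card_le_card hGF).trans hFk⟩,
  fun v => mem_filter.2 ⟨hΔ.2 v, by simpa using hk⟩⟩

theorem faceCount_skeleton (Δ : Finset (Finset V)) (k j : ℕ) :
    faceCount (skeleton Δ k) j = if j ≤ k then faceCount Δ j else 0 := by
  rw [faceCount, skeleton, filter_filter]
  split_ifs with hjk
  · exact congrArg card (filter_congr fun F _ => by omega)
  · exact card_eq_zero.2 (filter_eq_empty_iff.2 fun F _ => by omega)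

variable [Fintype V]

theorem IsComplex.faceCount_one (hΔ : IsComplex Δ) : faceCount Δ 1 = Fintype.card V := by
  have : {F ∈ Δ | #F = 1} = univ.map ⟨singleton, singleton_injective⟩ := by
    ext F
    simp only [mem_filter, card_eq_one, mem_map, mem_univ, true_and, Function.Embedding.coeFn_mk]
    exact ⟨fun ⟨_, v, hv⟩ => ⟨v, hv.symm⟩, fun ⟨v, hv⟩ => ⟨hv ▸ hΔ.2 v, v, hv.symm⟩⟩
  rw [faceCount, this, card_map, card_univ]

variable {ι : Type*} [DecidableEq ι]

theorem isComplex_rainbowSets (c : V → ι) : IsComplex (rainbowSets c) :=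
  ⟨fun _ hF _ hGF => isLowerSet_rainbowSets hGF hF, fun _ => mem_rainbowSets.2 (by simp)⟩

theorem IsComplex.subset_rainbowSets (hΔ : IsComplex Δ) (c : (underlyingGraph Δ).Coloring ι) :
    Δ ⊆ rainbowSets c := fun F hF => mem_rainbowSets.2 fun v hv w hw hvw => by
  by_contra hne
  exact c.valid ⟨hne, hΔ.1 F hF {v, w} (insert_subset hv (singleton_subset_iff.2 hw))⟩ hvw

theorem colorable_underlyingGraph_of_subset_rainbowSets [Fintype ι] {c : V → ι}
    (hΔ : Δ ⊆ rainbowSets c) : (underlyingGraph Δ).Colorable (Fintype.card ι) := by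
  refine SimpleGraph.Coloring.colorable (G := underlyingGraph Δ) (.mk c fun {v w} hvw hc => ?_)
  obtain ⟨hne, hvw_mem⟩ := hvw
  exact hne (mem_rainbowSets.1 (hΔ hvw_mem) (by simp) (by simp) hc)

theorem IsComplex.ratioAntitone_faceCount [Finite ι] (hΔ : IsComplex Δ)
    (c : (underlyingGraph Δ).Coloring ι) {d : V → ι} (hd : Set.univ.EquitableOn (classCard d)) :
    RatioAntitone (fun k => (faceCount Δ k : ℝ)) (fun k => (faceCount (rainbowSets d) k : ℝ)) := by
  cases nonempty_fintype ι
  have hΔc := hΔ.subset_rainbowSets c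
  rw [faceCount_eq_weightedEsymm hΔc, faceCount_rainbowSets]
  exact (ratioAntitone_weightedEsymm (fun _ => Nat.cast_nonneg _) colorDensity_nonneg
    (colorDensity_antitone hΔ.isLowerSet hΔc)).trans
    (ratioAntitone_esymm_of_equitableOn hd (sum_classCard.trans sum_classCard.symm))

end Complexes

section Turan

/-- The coloring of `T(n,r)` by residues modulo `r`; its color classes are the parts. -/
def turanColor (n r : ℕ) [NeZero r] (v : Fin n) : Fin r :=
  Fin.ofNat r v

variable (n r : ℕ) [NeZero r]

theorem turanCount_eq_faceCount_rainbowSets (k : ℕ) :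
    turanCount n r k = faceCount (rainbowSets (turanColor n r)) k := by
  rw [turanCount, cliqueCount, faceCount, ← Set.ncard_coe_finset]
  congr 1
  ext F
  simp only [coe_filter, mem_rainbowSets, Set.mem_ofPred_eq, SimpleGraph.isNClique_iff]
  refine and_congr_left' ?_
  simp only [Set.InjOn, SimpleGraph.isClique_iff, Set.Pairwise, SimpleGraph.turanGraph_adj,
    turanColor, Fin.ext_iff, Fin.val_ofNat, not_imp_not]

theorem classCard_turanColor (i : Fin r) :
    classCard (turanColor n r) i = n.count (· ≡ i [MOD r]) := by
  rw [classCard, Nat.count_eq_card_filter_range, ← card_map Fin.valEmbedding]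
  congr 1
  ext v
  simp only [mem_map, mem_filter, mem_univ, true_and, mem_range, Fin.valEmbedding_apply,
    turanColor, Fin.ext_iff, Fin.val_ofNat, Nat.ModEq, Nat.mod_eq_of_lt i.2]
  exact ⟨fun ⟨w, hw, hwv⟩ => hwv ▸ ⟨w.2, hw⟩, fun ⟨hvn, hv⟩ => ⟨⟨v, hvn⟩, hv, rfl⟩⟩

theorem equitableOn_classCard_turanColor :
    Set.univ.EquitableOn (classCard (turanColor n r)) := fun i j _ _ => by
  have hr := Nat.pos_of_neZero r
  rw [classCard_turanColor, classCard_turanColor, Nat.count_modEq_card _ hr,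
    Nat.count_modEq_card _ hr]
  split_ifs <;> omega

end Turan

/-- **Kozlov's conjecture** (main theorem): the convex hull of the set of `f`-vectors
`(f_1(Δ), …, f_n(Δ))` of `r`-colorable simplicial complexes `Δ` on `n` vertices equals
the convex hull of the truncations `g^1, …, g^n` of the clique vector
`g = (t_1(n,r), …, t_n(n,r))` of the Turán graph `T(n,r)`. -/
theorem convexHull_faceVectors_colorable_eq_convexHull_truncations
    (n r : ℕ) (hn : 0 < n) (hr : 0 < r) :
    convexHull ℝ
        {x : Fin n → ℝ | ∃ Δ : Finset (Finset (Fin n)), IsComplex Δ ∧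
          (underlyingGraph Δ).Colorable r ∧
          x = fun i : Fin n => (faceCount Δ ((i : ℕ) + 1) : ℝ)} =
      convexHull ℝ
        {x : Fin n → ℝ | ∃ k, 1 ≤ k ∧ k ≤ n ∧
          x = trunc (fun i : Fin n => (turanCount n r ((i : ℕ) + 1) : ℝ)) k} := by
  have : NeZero r := ⟨hr.ne'⟩
  have hT : IsComplex (rainbowSets (turanColor n r)) := isComplex_rainbowSets _
  simp only [turanCount_eq_faceCount_rainbowSets]
  refine (convexHull_min ?_ (convex_convexHull ℝ _)).antisymm (convexHull_mono ?_)
  · rintro _ ⟨Δ, hΔ, ⟨c⟩, rfl⟩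
    refine (hΔ.ratioAntitone_faceCount c
      (equitableOn_classCard_turanColor n r)).mem_convexHull_trunc hn ?_ ?_
    · simp only [hΔ.faceCount_one, hT.faceCount_one]
    · simpa only [hT.faceCount_one, Fintype.card_fin] using Nat.cast_ne_zero.2 hn.ne'
  · rintro _ ⟨k, hk, -, rfl⟩
    refine ⟨skeleton (rainbowSets (turanColor n r)) k, hT.skeleton hk, ?_, ?_⟩
    · simpa only [Fintype.card_fin] using
        colorable_underlyingGraph_of_subset_rainbowSets (c := turanColor n r) (skeleton_subset _ k)
    · funext i
      simp only [trunc, faceCount_skeleton, Nat.cast_ite, Nat.cast_zero]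
end

section
/- Let n and r be positive integers and let G be a finite simple graph on n vertices with clique number at most r. Then for every k with 2 ≤ k ≤ r, c_k(G) · t_{k-1}(n,r) ≤ c_{k-1}(G) · t_k(n,r); moreover c_2(G) ≤ t_2(n,r). Equivalently, the ratios c_k(G)/t_k(n,r) form a weakly decreasing sequence in k, bounded above by 1 from k = 2 on. -/
/-!
For `i ≤ j`, consider the functional `H ↦ t_i c_j(H) - t_j c_i(H)`, where `t_k` counts the
`k`-cliques of the Turán graph; the claim is that it is nonpositive. No clique contains two
nonadjacent vertices `s` and `t`, so `c_k` is the average of its values at the two graphs obtained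
by turning one of `s`, `t` into a copy of the other. Hence Zykov symmetrization applies: among the
maximizers without large cliques choose one with the most edges. Symmetrizing it changes neither the
functional nor the number of edges, so nonadjacent vertices have equal degrees. The symmetrized
graph is again such a maximizer, and comparing degrees in both shows that nonadjacency is
transitive, i.e. that the graph is complete multipartite.

The clique counts of a complete multipartite graph are the elementary symmetric polynomials `e_k` of
its part sizes. Replacing two parts of sizes `x ≥ y + 2` by parts of sizes `x - 1` and `y + 1` keeps
their sum and increases their product. Since the sequence `e_k` of the other parts is log-concave,
this does not decrease `e_j / e_i`. Repeating it leads to the Turán graph.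
-/

section Esymm

variable {R : Type*} [CommSemiring R]

theorem multiset_esymm_zero (m : Multiset R) : m.esymm 0 = 1 := by
  simp [Multiset.esymm]

theorem multiset_esymm_cons_succ (x : R) (m : Multiset R) (k : ℕ) :
    (x ::ₘ m).esymm (k + 1) = m.esymm (k + 1) + x * m.esymm k := by
  simp [Multiset.esymm, Multiset.powersetCard_cons, Multiset.map_map, Multiset.sum_map_mul_left]

theorem multiset_esymm_cons_cons_add_two (x y : R) (m : Multiset R) (k : ℕ) :
    (x ::ₘ y ::ₘ m).esymm (k + 2) =
      m.esymm (k + 2) + (x + y) * m.esymm (k + 1) + x * y * m.esymm k := by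
  simp only [multiset_esymm_cons_succ]
  ring

theorem multiset_esymm_cons_cons_one (x y : R) (m : Multiset R) :
    (x ::ₘ y ::ₘ m).esymm 1 = m.esymm 1 + (x + y) := by
  rw [multiset_esymm_cons_succ, multiset_esymm_cons_succ, multiset_esymm_zero, multiset_esymm_zero]
  ring

variable [PartialOrder R] [IsOrderedRing R] {m : Multiset R}

theorem multiset_esymm_nonneg (hm : ∀ x ∈ m, 0 ≤ x) (k : ℕ) : 0 ≤ m.esymm k := by
  refine Multiset.sum_nonneg fun p hp ↦ ?_
  obtain ⟨s, hs, rfl⟩ := Multiset.mem_map.1 hp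
  exact Multiset.prod_nonneg fun x hx ↦
    hm x (Multiset.mem_of_le (Multiset.mem_powersetCard.1 hs).1 hx)

theorem multiset_esymm_add_le (hm : ∀ x ∈ m, 0 ≤ x) (i j : ℕ) :
    m.esymm (i + j) ≤ m.esymm i * m.esymm j := by
  induction m using Multiset.induction generalizing i j with
  | empty =>
    rcases i with _ | i
    · simp [multiset_esymm_zero]
    · simp [Multiset.esymm, Multiset.powersetCard_zero_right, Nat.succ_add]
  | cons x m ih =>
    obtain ⟨hx, hm'⟩ := Multiset.forall_mem_cons.1 hm
    rcases i with _ | i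
    · simp [multiset_esymm_zero]
    rcases j with _ | j
    · simp [multiset_esymm_zero]
    calc (x ::ₘ m).esymm (i + 1 + (j + 1))
        = m.esymm (i + 1 + (j + 1)) + x * m.esymm (i + (j + 1)) := by
          rw [← Nat.add_assoc, multiset_esymm_cons_succ, Nat.succ_add_eq_add_succ i]
      _ ≤ m.esymm (i + 1) * m.esymm (j + 1) + x * (m.esymm i * m.esymm (j + 1)) := by
          gcongr ?_ + x * ?_ <;> exact ih hm' _ _
      _ = (x ::ₘ m).esymm (i + 1) * m.esymm (j + 1) := by
          rw [multiset_esymm_cons_succ]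
          ring
      _ ≤ (x ::ₘ m).esymm (i + 1) * (x ::ₘ m).esymm (j + 1) := by
          refine mul_le_mul_of_nonneg_left ?_ (multiset_esymm_nonneg hm _)
          rw [multiset_esymm_cons_succ x m j]
          exact le_add_of_nonneg_right (mul_nonneg hx (multiset_esymm_nonneg hm' j))

theorem multiset_esymm_mul_esymm_add_le (hm : ∀ x ∈ m, 0 ≤ x) {i j : ℕ} (hij : i ≤ j) (d : ℕ) :
    m.esymm i * m.esymm (j + d) ≤ m.esymm (i + d) * m.esymm j := by
  induction m using Multiset.induction generalizing i j d with
  | empty =>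
    rcases j with _ | j
    · simp [Nat.le_zero.1 hij, mul_comm]
    · simp [Multiset.esymm, Multiset.powersetCard_zero_right, Nat.succ_add]
  | cons x m ih =>
    obtain ⟨hx, hm'⟩ := Multiset.forall_mem_cons.1 hm
    rcases d with _ | d
    · rfl
    rcases i with _ | i
    · rw [multiset_esymm_zero, one_mul, Nat.zero_add, Nat.add_comm]
      exact multiset_esymm_add_le hm _ _
    obtain ⟨j, rfl⟩ := Nat.exists_eq_add_one.2 (Nat.zero_lt_of_lt hij)
    have hij' : i ≤ j := Nat.le_of_succ_le_succ hij
    have hcons (l : ℕ) : (x ::ₘ m).esymm (l + 1 + (d + 1)) =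
        m.esymm (l + 1 + (d + 1)) + x * m.esymm (l + (d + 1)) := by
      rw [← Nat.add_assoc, multiset_esymm_cons_succ, Nat.succ_add_eq_add_succ l]
    calc (x ::ₘ m).esymm (i + 1) * (x ::ₘ m).esymm (j + 1 + (d + 1))
        = m.esymm (i + 1) * m.esymm (j + 1 + (d + 1)) +
            x * (m.esymm i * m.esymm (j + (d + 2)) + m.esymm (i + 1) * m.esymm (j + 1 + d)) +
            x * x * (m.esymm i * m.esymm (j + (d + 1))) := by
          rw [hcons, multiset_esymm_cons_succ, Nat.add_right_comm j 1 d]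
          ring_nf
      _ ≤ m.esymm (i + 1 + (d + 1)) * m.esymm (j + 1) +
            x * (m.esymm (i + (d + 2)) * m.esymm j + m.esymm (i + 1 + d) * m.esymm (j + 1)) +
            x * x * (m.esymm (i + (d + 1)) * m.esymm j) := by
          gcongr ?_ + x * (?_ + ?_) + x * x * ?_
          exacts [ih hm' hij _, ih hm' hij' _, ih hm' hij _, ih hm' hij' _]
      _ = (x ::ₘ m).esymm (i + 1 + (d + 1)) * (x ::ₘ m).esymm (j + 1) := by
          rw [hcons, multiset_esymm_cons_succ, Nat.add_right_comm i 1 d]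
          ring_nf

section Smoothing

variable {x y x' y' : R} (hm : ∀ z ∈ m, 0 ≤ z) (hadd : x + y = x' + y') (hmul : x * y ≤ x' * y')
include hm hadd hmul

theorem multiset_esymm_cons_cons_le (k : ℕ) :
    (x ::ₘ y ::ₘ m).esymm k ≤ (x' ::ₘ y' ::ₘ m).esymm k := by
  match k with
  | 0 => simp only [multiset_esymm_zero, le_refl]
  | 1 => rw [multiset_esymm_cons_cons_one, multiset_esymm_cons_cons_one, hadd]
  | k + 2 =>
    rw [multiset_esymm_cons_cons_add_two, multiset_esymm_cons_cons_add_two, hadd]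
    gcongr
    exact multiset_esymm_nonneg hm k

theorem multiset_esymm_cons_cons_mul_le [ExistsAddOfLE R] [AddLeftReflectLE R]
    (hx : 0 ≤ x) (hy : 0 ≤ y) {i j : ℕ} (hij : i ≤ j) :
    (x ::ₘ y ::ₘ m).esymm j * (x' ::ₘ y' ::ₘ m).esymm i ≤
      (x ::ₘ y ::ₘ m).esymm i * (x' ::ₘ y' ::ₘ m).esymm j := by
  have hle := multiset_esymm_cons_cons_le hm hadd hmul j
  match i with
  | 0 => simpa only [multiset_esymm_zero, mul_one, one_mul] using hle
  | 1 =>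
    have hnonneg : 0 ≤ m.esymm 1 + (x + y) :=
      add_nonneg (multiset_esymm_nonneg hm 1) (add_nonneg hx hy)
    rw [multiset_esymm_cons_cons_one, multiset_esymm_cons_cons_one, ← hadd, mul_comm]
    exact mul_le_mul_of_nonneg_left hle hnonneg
  | i + 2 =>
    obtain ⟨j, rfl⟩ := Nat.exists_eq_add_of_le' ((Nat.le_add_left 2 i).trans hij)
    have hij' : i ≤ j := Nat.le_of_add_le_add_right hij
    let A : ℕ → R := fun k ↦ m.esymm (k + 2) + (x + y) * m.esymm (k + 1)
    have hbase : A j * m.esymm i ≤ A i * m.esymm j := by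
      calc A j * m.esymm i
          = m.esymm i * m.esymm (j + 2) + (x + y) * (m.esymm i * m.esymm (j + 1)) := by ring
        _ ≤ m.esymm (i + 2) * m.esymm j + (x + y) * (m.esymm (i + 1) * m.esymm j) := by
            gcongr ?_ + (x + y) * ?_ <;> exact multiset_esymm_mul_esymm_add_le hm hij' _
        _ = A i * m.esymm j := by ring
    simp only [multiset_esymm_cons_cons_add_two, ← hadd]
    calc (A j + x * y * m.esymm j) * (A i + x' * y' * m.esymm i)
        = A j * A i + x * y * (x' * y') * (m.esymm i * m.esymm j) +
            (x * y * (A i * m.esymm j) + x' * y' * (A j * m.esymm i)) := by ring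
      _ ≤ A j * A i + x * y * (x' * y') * (m.esymm i * m.esymm j) +
            (x * y * (A j * m.esymm i) + x' * y' * (A i * m.esymm j)) := by
          exact add_le_add le_rfl (mul_add_mul_le_mul_add_mul hmul hbase)
      _ = (A i + x * y * m.esymm i) * (A j + x' * y' * m.esymm j) := by ring

end Smoothing

end Esymm

/-- A multiset of natural numbers is balanced if any two of its elements differ by at most one.
The part sizes of a Turán graph form such a multiset. -/
def IsBalanced (m : Multiset ℕ) : Prop :=
  ∀ x ∈ m, ∀ y ∈ m, x ≤ y + 1

theorem IsBalanced.eq_or_eq_add_one {m : Multiset ℕ} (hm : IsBalanced m) {x : ℕ} (hx : x ∈ m) :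
    x = m.sum / m.card ∨ x = m.sum / m.card + 1 := by
  obtain ⟨P, rfl⟩ := Multiset.exists_cons_of_mem hx
  have hupper : P.sum ≤ P.card * (x + 1) := by
    simpa using Multiset.sum_le_card_nsmul P (x + 1) fun y hy ↦
      hm y (Multiset.mem_cons_of_mem hy) x hx
  have hlower : P.card * (x - 1) ≤ P.sum := by
    simpa using Multiset.card_nsmul_le_sum fun y hy ↦
      Nat.sub_le_of_le_add (hm x hx y (Multiset.mem_cons_of_mem hy))
  have hdiv_lt : (x + P.sum) / (P.card + 1) < x + 1 := by
    rw [Nat.div_lt_iff_lt_mul P.card.succ_pos, Nat.mul_succ, mul_comm]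
    lia
  have hle_div : x - 1 ≤ (x + P.sum) / (P.card + 1) := by
    rw [Nat.le_div_iff_mul_le P.card.succ_pos, Nat.mul_succ, mul_comm]
    lia
  simp only [Multiset.sum_cons, Multiset.card_cons]
  lia

theorem IsBalanced.exists_eq_replicate_add_replicate {m : Multiset ℕ} (hm : IsBalanced m) :
    ∃ a b, m = Multiset.replicate a (m.sum / m.card) +
      Multiset.replicate b (m.sum / m.card + 1) := by
  set q := m.sum / m.card
  refine ⟨(m.filter (· = q)).card, (m.filter (¬ · = q)).card, ?_⟩
  rw [← Multiset.eq_replicate_card.2 fun x hx ↦ (Multiset.mem_filter.1 hx).2,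
    ← Multiset.eq_replicate_card.2 fun x hx ↦ ?_, Multiset.filter_add_not]
  obtain ⟨hxm, hxq⟩ := Multiset.mem_filter.1 hx
  exact (hm.eq_or_eq_add_one hxm).resolve_left hxq

theorem IsBalanced.eq_of_card_eq_of_sum_eq {m m' : Multiset ℕ} (hm : IsBalanced m)
    (hm' : IsBalanced m') (hcard : m.card = m'.card) (hsum : m.sum = m'.sum) : m = m' := by
  obtain ⟨a, b, h⟩ := hm.exists_eq_replicate_add_replicate
  obtain ⟨a', b', h'⟩ := hm'.exists_eq_replicate_add_replicate
  rw [← hcard, ← hsum] at h'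
  generalize m.sum / m.card = q at h h'
  subst h h'
  simp only [Multiset.card_add, Multiset.card_replicate, Multiset.sum_add, Multiset.sum_replicate,
    smul_eq_mul, mul_add, mul_one, ← add_assoc, ← add_mul] at hcard hsum
  rw [hcard] at hsum
  obtain rfl : b = b' := Nat.add_left_cancel hsum
  obtain rfl : a = a' := Nat.add_right_cancel hcard
  rfl

theorem exists_eq_cons_cons_of_not_isBalanced {m : Multiset ℕ} (hm : ¬ IsBalanced m) :
    ∃ x d P, m = (x + d + 2) ::ₘ x ::ₘ P := by
  simp only [IsBalanced, not_forall, not_le] at hm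
  obtain ⟨y, hy, x, hx, hxy⟩ := hm
  obtain ⟨P, rfl⟩ := Multiset.exists_cons_of_mem hy
  obtain ⟨Q, rfl⟩ := Multiset.exists_cons_of_mem
    ((Multiset.mem_cons.1 hx).resolve_left (Nat.lt_of_succ_lt hxy).ne)
  obtain ⟨d, rfl⟩ := Nat.exists_eq_add_of_lt hxy
  exact ⟨x, d, Q, by rw [show x + d + 2 = x + 1 + d + 1 by ring]⟩

theorem esymm_mul_esymm_le_trans {m₁ m₂ m₃ : Multiset ℕ} {i j : ℕ} (hij : i ≤ j)
    (hle : m₁.esymm j ≤ m₂.esymm j)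
    (h₁₂ : m₁.esymm j * m₂.esymm i ≤ m₁.esymm i * m₂.esymm j)
    (h₂₃ : m₂.esymm j * m₃.esymm i ≤ m₂.esymm i * m₃.esymm j) :
    m₁.esymm j * m₃.esymm i ≤ m₁.esymm i * m₃.esymm j := by
  obtain h0 | hpos := Nat.eq_zero_or_pos (m₂.esymm i)
  · have hadd_le := multiset_esymm_add_le (m := m₂) (fun _ _ ↦ zero_le) i (j - i)
    rw [Nat.add_sub_cancel' hij, h0, zero_mul] at hadd_le
    rw [Nat.le_zero.1 (hle.trans hadd_le), zero_mul]
    exact zero_le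
  refine Nat.le_of_mul_le_mul_left ?_ hpos
  calc m₂.esymm i * (m₁.esymm j * m₃.esymm i)
      = m₁.esymm j * m₂.esymm i * m₃.esymm i := by ring
    _ ≤ m₁.esymm i * m₂.esymm j * m₃.esymm i := by gcongr
    _ = m₁.esymm i * (m₂.esymm j * m₃.esymm i) := by ring
    _ ≤ m₁.esymm i * (m₂.esymm i * m₃.esymm j) := by gcongr
    _ = m₂.esymm i * (m₁.esymm i * m₃.esymm j) := by ring

theorem IsBalanced.esymm_mul_esymm_le {m m' : Multiset ℕ} (hm' : IsBalanced m')
    (hcard : m.card = m'.card) (hsum : m.sum = m'.sum) {i j : ℕ} (hij : i ≤ j) :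
    m.esymm j * m'.esymm i ≤ m.esymm i * m'.esymm j := by
  induction hN : (m.map (· ^ 2)).sum using Nat.strong_induction_on generalizing m with
  | h N ih =>
    subst hN
    by_cases hm : IsBalanced m
    · rw [hm.eq_of_card_eq_of_sum_eq hm' hcard hsum, mul_comm]
    obtain ⟨x, d, P, rfl⟩ := exists_eq_cons_cons_of_not_isBalanced hm
    have hadd : (x + d + 2) + x = (x + d + 1) + (x + 1) := by ring
    have hmul : (x + d + 2) * x ≤ (x + d + 1) * (x + 1) := by lia
    have hrec : ((x + d + 1) ::ₘ (x + 1) ::ₘ P).esymm j * m'.esymm i ≤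
        ((x + d + 1) ::ₘ (x + 1) ::ₘ P).esymm i * m'.esymm j :=
      ih _ (by simp only [Multiset.map_cons, Multiset.sum_cons]; lia) (by simpa using hcard)
        (by simpa only [Multiset.sum_cons, ← add_assoc, ← hadd] using hsum) rfl
    have hstep := multiset_esymm_cons_cons_mul_le (m := P) (fun _ _ ↦ zero_le) hadd hmul
      zero_le zero_le hij
    have hle := multiset_esymm_cons_cons_le (m := P) (fun _ _ ↦ zero_le) hadd hmul j
    exact esymm_mul_esymm_le_trans hij hle hstep hrec

theorem cliqueCount_zero {V : Type*} (G : SimpleGraph V) : cliqueCount G 0 = 1 := by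
  simp [cliqueCount, SimpleGraph.isNClique_zero]

section Replace

open SimpleGraph

variable {V : Type*}

/-- The number of `k`-cliques in the link of `v`, the subgraph induced by the neighbours of `v`.
They correspond to the `(k + 1)`-cliques of `G` that contain `v`. -/
noncomputable def linkCliqueCount (G : SimpleGraph V) (k : ℕ) (v : V) : ℕ :=
  {K : Finset V | G.IsNClique k K ∧ ∀ w ∈ K, G.Adj v w}.ncard

variable (G : SimpleGraph V)

theorem ncard_isNClique_succ_mem (k : ℕ) (v : V) :
    {K : Finset V | G.IsNClique (k + 1) K ∧ v ∈ K}.ncard = linkCliqueCount G k v := by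
  classical
  refine Set.ncard_congr (fun K _ ↦ K.erase v) ?_ ?_ ?_
  · rintro K ⟨hK, hv⟩
    refine ⟨hK.erase_of_mem hv, fun w hw ↦ ?_⟩
    obtain ⟨hwv, hwK⟩ := Finset.mem_erase.1 hw
    exact hK.isClique hv hwK hwv.symm
  · rintro K L ⟨-, hK⟩ ⟨-, hL⟩ h
    exact Finset.erase_injOn' v hK hL h
  · rintro L ⟨hL, hv⟩
    exact ⟨insert v L, ⟨hL.insert hv, Finset.mem_insert_self v L⟩,
      Finset.erase_insert fun h ↦ (hv v h).ne rfl⟩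

theorem cliqueCount_succ [Finite V] (k : ℕ) (v : V) :
    cliqueCount G (k + 1) =
      linkCliqueCount G k v + {K : Finset V | G.IsNClique (k + 1) K ∧ v ∉ K}.ncard := by
  rw [← ncard_isNClique_succ_mem]
  exact (Set.ncard_inter_add_ncard_sdiff_eq_ncard {K : Finset V | G.IsNClique (k + 1) K}
    {K | v ∈ K}).symm

variable {G} [DecidableEq V] {s t : V}

theorem isNClique_replaceVertex_iff_of_notMem {k : ℕ} {K : Finset V} (ht : t ∉ K) :
    (G.replaceVertex s t).IsNClique k K ↔ G.IsNClique k K := by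
  rw [isNClique_iff, isNClique_iff]
  refine and_congr_left' (forall₂_congr fun a ha ↦ forall₂_congr fun b hb ↦
    imp_congr_right fun _ ↦ G.adj_replaceVertex_iff_of_ne s ?_ ?_)
  exacts [ne_of_mem_of_not_mem ha ht, ne_of_mem_of_not_mem hb ht]

theorem linkCliqueCount_replaceVertex_right (hst : ¬ G.Adj s t) (k : ℕ) :
    linkCliqueCount (G.replaceVertex s t) k t = linkCliqueCount G k s := by
  have ht : ∀ {K : Finset V}, (∀ w ∈ K, (G.replaceVertex s t).Adj t w) → t ∉ K :=
    fun h htK ↦ (h t htK).ne rfl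
  have hs : ∀ {K : Finset V}, (∀ w ∈ K, G.Adj s w) → t ∉ K := fun h htK ↦ hst (h t htK)
  have hlink : ∀ {K : Finset V}, t ∉ K →
      ((∀ w ∈ K, (G.replaceVertex s t).Adj t w) ↔ ∀ w ∈ K, G.Adj s w) := fun htK ↦
    forall₂_congr fun w hw ↦ G.adj_replaceVertex_iff_of_ne_right s (ne_of_mem_of_not_mem hw htK)
  unfold linkCliqueCount
  congr 1
  ext K
  exact ⟨fun ⟨hK, h⟩ ↦ ⟨(isNClique_replaceVertex_iff_of_notMem (ht h)).1 hK, (hlink (ht h)).1 h⟩,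
    fun ⟨hK, h⟩ ↦ ⟨(isNClique_replaceVertex_iff_of_notMem (hs h)).2 hK, (hlink (hs h)).2 h⟩⟩

theorem cliqueCount_replaceVertex_add [Finite V] (hst : ¬ G.Adj s t) (k : ℕ) :
    cliqueCount (G.replaceVertex s t) (k + 1) + linkCliqueCount G k t =
      cliqueCount G (k + 1) + linkCliqueCount G k s := by
  have havoid : {K : Finset V | (G.replaceVertex s t).IsNClique (k + 1) K ∧ t ∉ K} =
      {K : Finset V | G.IsNClique (k + 1) K ∧ t ∉ K} :=
    Set.ext fun K ↦ and_congr_left fun ht ↦ isNClique_replaceVertex_iff_of_notMem ht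
  rw [cliqueCount_succ G k t, cliqueCount_succ _ k t, havoid,
    linkCliqueCount_replaceVertex_right hst]
  lia

theorem cliqueCount_replaceVertex_add_cliqueCount_replaceVertex [Finite V] (hst : ¬ G.Adj s t)
    (k : ℕ) :
    cliqueCount (G.replaceVertex s t) k + cliqueCount (G.replaceVertex t s) k =
      cliqueCount G k + cliqueCount G k := by
  rcases k with _ | k
  · simp only [cliqueCount_zero]
  have hs := cliqueCount_replaceVertex_add hst k
  have ht := cliqueCount_replaceVertex_add (mt Adj.symm hst) k
  lia

end Replace

section Zykov

open SimpleGraph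

variable {V : Type*} {G : SimpleGraph V} {s t u : V} [DecidableEq V]

theorem neighborSet_replaceVertex_left (hst : ¬ G.Adj s t) :
    (G.replaceVertex s t).neighborSet s = G.neighborSet s := by
  ext w
  obtain rfl | hw := eq_or_ne w t
  · exact iff_of_false (G.not_adj_replaceVertex_same s w) hst
  · exact G.adj_replaceVertex_iff_of_ne_left s hw

theorem neighborSet_replaceVertex_of_not_adj (hsu : ¬ G.Adj s u) (hut : u ≠ t) :
    (G.replaceVertex s t).neighborSet u = G.neighborSet u \ {t} := by
  ext w
  obtain rfl | hw := eq_or_ne w t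
  · simpa [adj_comm _ u, G.adj_replaceVertex_iff_of_ne_right s hut]
  · simp [G.adj_replaceVertex_iff_of_ne s hut hw, hw]

theorem ncard_edgeSet_replaceVertex [Finite V] (hst : ¬ G.Adj s t) :
    (G.replaceVertex s t).edgeSet.ncard =
      G.edgeSet.ncard + (G.neighborSet s).ncard - (G.neighborSet t).ncard := by
  classical
  have := Fintype.ofFinite V
  simpa only [← coe_edgeFinset, ← coe_neighborFinset, Set.ncard_coe_finset,
    card_neighborFinset_eq_degree] using G.card_edgeFinset_replaceVertex_of_not_adj hst

/-- A graph parameter is symmetrizable if its value at `G` is at most the average of its values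
at the two Zykov symmetrizations of `G` along any pair of nonadjacent vertices. The average is
cleared of its denominator, so that no division is needed in the codomain. -/
def IsSymmetrizable {A : Type*} [Add A] [LE A] (f : SimpleGraph V → A) : Prop :=
  ∀ ⦃G : SimpleGraph V⦄ ⦃s t : V⦄, ¬ G.Adj s t →
    f G + f G ≤ f (G.replaceVertex s t) + f (G.replaceVertex t s)

theorem isSymmetrizable_ncard_edgeSet [Finite V] :
    IsSymmetrizable fun G : SimpleGraph V ↦ G.edgeSet.ncard := by
  intro G s t hst
  simp only [ncard_edgeSet_replaceVertex hst, ncard_edgeSet_replaceVertex (mt Adj.symm hst)]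
  lia

theorem IsSymmetrizable.prodLex {A B : Type*} [Add A] [PartialOrder A] [Add B] [Preorder B]
    {f : SimpleGraph V → A} {g : SimpleGraph V → B} (hf : IsSymmetrizable f)
    (hg : IsSymmetrizable g) :
    IsSymmetrizable fun G ↦ toLex (f G, g G) :=
  fun _ _ _ hst ↦ Prod.Lex.toLex_mono ⟨hf hst, hg hst⟩

variable {A : Type*} [AddCommMonoid A] [PartialOrder A]

theorem IsSymmetrizable.replaceVertex_eq [IsOrderedCancelAddMonoid A] {f : SimpleGraph V → A}
    (hf : IsSymmetrizable f) {n : ℕ} (hG : G.CliqueFree n)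
    (hmax : IsMaxOn f {G | G.CliqueFree n} G) (hst : ¬ G.Adj s t) :
    f (G.replaceVertex s t) = f G := by
  refine (hmax (hG.replaceVertex s t)).antisymm (le_of_add_le_add_right (a := f G) ?_)
  calc f G + f G ≤ f (G.replaceVertex s t) + f (G.replaceVertex t s) := hf hst
    _ ≤ f (G.replaceVertex s t) + f G := by
      gcongr
      exact hmax (hG.replaceVertex t s)

section MaximalPair

variable [Finite V] [IsOrderedCancelAddMonoid A] {f : SimpleGraph V → A} {n : ℕ}

theorem IsSymmetrizable.ncard_neighborSet_eq (hf : IsSymmetrizable f) (hG : G.CliqueFree n)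
    (hmax : IsMaxOn (fun G ↦ toLex (f G, G.edgeSet.ncard)) {G | G.CliqueFree n} G)
    (hst : ¬ G.Adj s t) : (G.neighborSet s).ncard = (G.neighborSet t).ncard := by
  have hlex := hf.prodLex isSymmetrizable_ncard_edgeSet
  have hts : ¬ G.Adj t s := mt Adj.symm hst
  have hs := congrArg (fun p ↦ (ofLex p).2) (hlex.replaceVertex_eq hG hmax hst)
  have ht := congrArg (fun p ↦ (ofLex p).2) (hlex.replaceVertex_eq hG hmax hts)
  simp only [ofLex_toLex, ncard_edgeSet_replaceVertex hst, ncard_edgeSet_replaceVertex hts]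
    at hs ht
  lia

theorem IsSymmetrizable.isCompleteMultipartite_of_isMaxOn (hf : IsSymmetrizable f)
    (hG : G.CliqueFree n)
    (hmax : IsMaxOn (fun G ↦ toLex (f G, G.edgeSet.ncard)) {G | G.CliqueFree n} G) :
    G.IsCompleteMultipartite := by
  refine ⟨fun t s u hts hsu htu ↦ ?_⟩
  have hst : ¬ G.Adj s t := mt Adj.symm hts
  have hsu' : ¬ (G.replaceVertex s t).Adj s u :=
    mt (G.adj_replaceVertex_iff_of_ne_left s htu.ne').1 hsu
  have hmax' : IsMaxOn (fun G ↦ toLex (f G, G.edgeSet.ncard)) {G | G.CliqueFree n}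
      (G.replaceVertex s t) := fun H hH ↦ (hmax hH).trans_eq
    ((hf.prodLex isSymmetrizable_ncard_edgeSet).replaceVertex_eq hG hmax hst).symm
  have hlt : ((G.replaceVertex s t).neighborSet u).ncard < (G.neighborSet u).ncard := by
    rw [neighborSet_replaceVertex_of_not_adj hsu htu.ne']
    exact Set.ncard_sdiff_singleton_lt_of_mem htu.symm
  apply hlt.ne
  rw [← hf.ncard_neighborSet_eq (hG.replaceVertex s t) hmax' hsu',
    neighborSet_replaceVertex_left hst, hf.ncard_neighborSet_eq hG hmax hsu]

end MaximalPair

end Zykov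

theorem IsSymmetrizable.exists_isCompleteMultipartite_le {V A : Type*} [DecidableEq V] [Finite V]
    [AddCommMonoid A] [LinearOrder A] [IsOrderedCancelAddMonoid A] {f : SimpleGraph V → A}
    (hf : IsSymmetrizable f) {G : SimpleGraph V} {n : ℕ} (hG : G.CliqueFree n) :
    ∃ H : SimpleGraph V, H.CliqueFree n ∧ H.IsCompleteMultipartite ∧ f G ≤ f H := by
  obtain ⟨H, hH, hmax⟩ := Set.exists_max_image {H : SimpleGraph V | H.CliqueFree n}
    (fun H ↦ toLex (f H, H.edgeSet.ncard)) (Set.toFinite _) ⟨G, hG⟩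
  exact ⟨H, hH, hf.isCompleteMultipartite_of_isMaxOn hH hmax, Prod.Lex.monotone_fst _ _ (hmax G hG)⟩

section Multipartite

open SimpleGraph

theorem exists_eq_comap_top_of_isCompleteMultipartite {V : Type*} [Finite V] {G : SimpleGraph V}
    (hG : G.IsCompleteMultipartite) {r : ℕ} (hfree : G.CliqueFree (r + 1)) :
    ∃ c : V → Fin r, G = (⊤ : SimpleGraph (Fin r)).comap c := by
  classical
  have : Fintype (Quotient hG.setoid) := Fintype.ofFinite _
  have hcard : Fintype.card (Quotient hG.setoid) ≤ r := by
    by_contra! hlt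
    refine completeMultipartiteGraph.not_cliqueFree_of_le_card _
      (fun c ↦ ⟨c.out, hG.setoid.refl _⟩) hlt (hfree.comap hG.iso.symm.isContained)
  obtain ⟨e⟩ : Nonempty (Quotient hG.setoid ↪ Fin r) :=
    Function.Embedding.nonempty_of_card_le (by simpa using hcard)
  refine ⟨fun v ↦ e (Quotient.mk _ v), ?_⟩
  ext u v
  rw [comap_adj, top_adj, e.injective.ne_iff, Ne, Quotient.eq]
  exact not_not.symm

variable {V ι : Type*}

theorem ncard_setOf_bijOn (c : V → ι) (S : Finset ι) :
    {K : Finset V | Set.BijOn c K S}.ncard = ∏ i ∈ S, (c ⁻¹' {i}).ncard := by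
  classical
  let toFinset (f : (i : S) → c ⁻¹' {i.1}) : Finset V := Finset.univ.image fun i ↦ (f i).1
  have hsection (f : (i : S) → c ⁻¹' {i.1}) (i : S) : c (f i) = i := (f i).2
  have hinj : toFinset.Injective := by
    intro f g hfg
    ext i
    obtain ⟨j, -, hj⟩ := Finset.mem_image.1
      (hfg ▸ Finset.mem_image_of_mem _ (Finset.mem_univ i) : (f i : V) ∈ toFinset g)
    have hji : j = i := Subtype.ext (by rw [← hsection g j, hj, hsection f i])
    rw [← hj, hji]
  have hrange : Set.range toFinset = {K : Finset V | Set.BijOn c K S} := by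
    ext K
    constructor
    · rintro ⟨f, rfl⟩
      simp only [Set.mem_ofPred_eq, toFinset, Finset.coe_image, Finset.coe_univ]
      refine ⟨?_, ?_, fun i hi ↦ ⟨f ⟨i, hi⟩, Set.mem_image_of_mem _ trivial, hsection f ⟨i, hi⟩⟩⟩
      · rintro _ ⟨i, -, rfl⟩
        exact (hsection f i).symm ▸ i.2
      · rintro _ ⟨i, -, rfl⟩ _ ⟨j, -, rfl⟩ hij
        rw [Subtype.ext (a1 := i) (a2 := j) (by rw [← hsection f i, ← hsection f j, hij])]
    · intro hK
      choose f hfK hfc using fun i : S ↦ hK.surjOn i.2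
      refine ⟨fun i ↦ ⟨f i, hfc i⟩, Finset.ext fun v ↦ ⟨?_, fun hv ↦ ?_⟩⟩
      · simp only [toFinset, Finset.mem_image]
        rintro ⟨i, -, rfl⟩
        exact hfK i
      · exact Finset.mem_image.2
          ⟨⟨c v, hK.mapsTo hv⟩, Finset.mem_univ _, hK.injOn (hfK _) hv (hfc _)⟩
  rw [← hrange, Set.ncard_range_of_injective hinj, Nat.card_pi]
  simp only [Nat.card_coe_set_eq]
  exact Finset.prod_coe_sort S fun i ↦ (c ⁻¹' {i}).ncard

theorem isClique_comap_top_iff {c : V → ι} {K : Set V} :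
    ((⊤ : SimpleGraph ι).comap c).IsClique K ↔ Set.InjOn c K :=
  Set.injOn_iff_pairwise_ne.symm

/-- The sizes of the parts of the vertex partition given by a labelling `c : V → ι`. Labels that
are not attained contribute empty parts, so that the number of parts is always that of `ι`. -/
noncomputable def partSizes [Fintype ι] (c : V → ι) : Multiset ℕ :=
  Finset.univ.val.map fun i ↦ (c ⁻¹' {i}).ncard

variable [Fintype ι] (c : V → ι)

theorem card_partSizes : (partSizes c).card = Fintype.card ι := by
  simp [partSizes]

theorem sum_partSizes [Finite V] : (partSizes c).sum = Nat.card V := by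
  rw [← Nat.card_congr (Equiv.sigmaFiberEquiv c), Nat.card_sigma]
  rfl

theorem cliqueCount_comap_top [Finite V] (k : ℕ) :
    cliqueCount ((⊤ : SimpleGraph ι).comap c) k = (partSizes c).esymm k := by
  classical
  have hunion : {K : Finset V | ((⊤ : SimpleGraph ι).comap c).IsNClique k K} =
      ⋃ S ∈ (Finset.powersetCard k (Finset.univ : Finset ι) : Set (Finset ι)),
        {K : Finset V | Set.BijOn c K (S : Set ι)} := by
    ext K
    simp only [isNClique_iff, isClique_comap_top_iff, Set.mem_ofPred_eq, Set.mem_iUnion,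
      Finset.mem_coe, Finset.mem_powersetCard_univ, exists_prop]
    constructor
    · rintro ⟨hinj, rfl⟩
      refine ⟨K.image c, Finset.card_image_of_injOn hinj, ?_⟩
      rw [Finset.coe_image]
      exact hinj.bijOn_image
    · rintro ⟨S, rfl, hS⟩
      exact ⟨hS.injOn, Finset.card_nbij c hS.mapsTo hS.injOn hS.surjOn⟩
  have hdisjoint {S T : Finset ι} (hST : S ≠ T) :
      Disjoint {K : Finset V | Set.BijOn c K S} {K : Finset V | Set.BijOn c K T} :=
    Set.disjoint_left.2 fun _ hS hT ↦
      hST (Finset.coe_injective (hS.image_eq.symm.trans hT.image_eq))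
  rw [cliqueCount, hunion, (Finset.finite_toSet _).ncard_biUnion (fun _ _ ↦ Set.toFinite _)
    fun _ _ _ _ ↦ hdisjoint, finsum_mem_coe_finset, partSizes, Finset.esymm_map_val]
  exact Finset.sum_congr rfl fun S _ ↦ ncard_setOf_bijOn c S

end Multipartite

section Turan

theorem turanGraph_eq_comap_top (n : ℕ) {r : ℕ} (hr : 0 < r) :
    SimpleGraph.turanGraph n r =
      (⊤ : SimpleGraph (Fin r)).comap fun v : Fin n ↦ ⟨v % r, Nat.mod_lt v hr⟩ := by
  ext v w
  simp [SimpleGraph.turanGraph_adj]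

theorem isBalanced_partSizes_mod (n : ℕ) {r : ℕ} (hr : 0 < r) :
    IsBalanced (partSizes fun v : Fin n ↦ (⟨v % r, Nat.mod_lt v hr⟩ : Fin r)) := by
  have hsize (i : Fin r) : ((fun v : Fin n ↦ (⟨v % r, Nat.mod_lt v hr⟩ : Fin r)) ⁻¹' {i}).ncard =
      n / r + if (i : ℕ) % r < n % r then 1 else 0 := by
    rw [← Nat.count_modEq_card n hr, Nat.count_eq_card_filter_range, ← Set.ncard_coe_finset,
      ← Set.ncard_image_of_injective _ Fin.val_injective]
    congr 1
    ext v
    simp [Fin.ext_iff, Nat.ModEq, Nat.mod_eq_of_lt i.2, Fin.exists_iff, and_comm]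
  intro x hx y hy
  obtain ⟨i, -, rfl⟩ := Multiset.mem_map.1 hx
  obtain ⟨j, -, rfl⟩ := Multiset.mem_map.1 hy
  rw [hsize, hsize]
  split_ifs <;> lia

theorem exists_isBalanced_turanCount_eq_esymm (n : ℕ) {r : ℕ} (hr : 0 < r) :
    ∃ m : Multiset ℕ, IsBalanced m ∧ m.card = r ∧ m.sum = n ∧
      ∀ k, turanCount n r k = m.esymm k := by
  refine ⟨_, isBalanced_partSizes_mod n hr, ?_, ?_, fun k ↦ ?_⟩
  · rw [card_partSizes, Fintype.card_fin]
  · rw [sum_partSizes, Nat.card_fin]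
  · rw [turanCount, turanGraph_eq_comap_top n hr, cliqueCount_comap_top]

theorem cliqueCount_comap_top_mul_turanCount_le {V : Type*} [Finite V] {r : ℕ} (hr : 0 < r)
    (c : V → Fin r) {i j : ℕ} (hij : i ≤ j) :
    cliqueCount ((⊤ : SimpleGraph (Fin r)).comap c) j * turanCount (Nat.card V) r i ≤
      cliqueCount ((⊤ : SimpleGraph (Fin r)).comap c) i * turanCount (Nat.card V) r j := by
  obtain ⟨m, hm, hcard, hsum, hturan⟩ := exists_isBalanced_turanCount_eq_esymm (Nat.card V) hr
  rw [hturan, hturan, cliqueCount_comap_top, cliqueCount_comap_top]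
  exact hm.esymm_mul_esymm_le (by rw [card_partSizes, hcard, Fintype.card_fin])
    (by rw [sum_partSizes, hsum]) hij

end Turan

theorem isSymmetrizable_mul_cliqueCount_sub {V : Type*} [DecidableEq V] [Finite V] (a b : ℤ)
    (i j : ℕ) :
    IsSymmetrizable fun G : SimpleGraph V ↦ a * cliqueCount G j - b * cliqueCount G i := by
  intro G s t hst
  have hi := cliqueCount_replaceVertex_add_cliqueCount_replaceVertex hst i
  have hj := cliqueCount_replaceVertex_add_cliqueCount_replaceVertex hst j
  zify at hi hj
  exact le_of_eq (by linear_combination b * hi - a * hj)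

theorem cliqueCount_ratio_mono_general {V : Type*} [Finite V] {r : ℕ} (hr : 0 < r)
    {G : SimpleGraph V} (hG : G.CliqueFree (r + 1)) {i j : ℕ} (hij : i ≤ j) :
    cliqueCount G j * turanCount (Nat.card V) r i ≤
      cliqueCount G i * turanCount (Nat.card V) r j := by
  classical
  have hsymm := isSymmetrizable_mul_cliqueCount_sub (V := V)
    (turanCount (Nat.card V) r i) (turanCount (Nat.card V) r j) i j
  obtain ⟨H, hH, hmultipartite, hle⟩ := hsymm.exists_isCompleteMultipartite_le hG
  obtain ⟨c, rfl⟩ := exists_eq_comap_top_of_isCompleteMultipartite hmultipartite hH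
  have hturan := cliqueCount_comap_top_mul_turanCount_le hr c hij
  zify at hturan ⊢
  linarith

/-- For any graph `G` on `n` vertices with clique number at most `r` and every
`2 ≤ k ≤ r`, the cross-multiplied inequality `c_k(G) t_{k-1}(n,r) ≤ c_{k-1}(G) t_k(n,r)`
holds; moreover `c_2(G) ≤ t_2(n,r)`.  In other words, the ratios `c_k(G)/t_k(n,r)` are
weakly decreasing in `k` and bounded above by `1` from `k = 2` on. -/
theorem cliqueCount_ratio_mono (n r : ℕ) (hn : 0 < n) (hr : 0 < r)
    (G : SimpleGraph (Fin n)) (hG : G.CliqueFree (r + 1)) :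
    (∀ k, 2 ≤ k → k ≤ r →
        cliqueCount G k * turanCount n r (k - 1) ≤
          cliqueCount G (k - 1) * turanCount n r k) ∧
      cliqueCount G 2 ≤ turanCount n r 2 := by
  have hmono {i j : ℕ} (hij : i ≤ j) := cliqueCount_ratio_mono_general hr hG hij
  rw [Nat.card_fin] at hmono
  exact ⟨fun k _ _ ↦ hmono (Nat.sub_le k 1),
    by simpa [turanCount, cliqueCount_zero] using hmono (Nat.zero_le 2)⟩
end

section
/- Let n and r be positive integers and let Δ be an r-colorable simplicial complex on n vertices. Then for every k with 2 ≤ k ≤ r, f_k(Δ) · t_{k-1}(n,r) ≤ f_{k-1}(Δ) · t_k(n,r). -/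
/-!
Fix a proper coloring of the underlying graph with color classes of sizes `a_1, ..., a_r`, and let
`e_k` be the `k`-th elementary symmetric polynomial in these sizes. Let `f_T` count the faces with
color set `T`. Deleting the vertex of color `i` gives `f_{T ∪ {i}} ≤ a_i f_T`. Given color sets
`S`, `T` of sizes `k + 1`, `k`, moving a color `i ∈ S \ T` from `S` to `T` therefore gives
`f_S ∏_{j ∈ T} a_j ≤ f_{S \ {i}} ∏_{j ∈ T ∪ {i}} a_j`. Averaging over `i ∈ S \ T` and summing
over `(S, T)` yields `f_{k+1} e_k ≤ f_k e_{k+1}`: since `|S| = |T| + 1`, the move to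
`S' = S \ {i}`, `T' = T ∪ {i}` preserves the averaging weight, `|T' \ S'| = |S \ T|`.

It remains to maximize `e_{k+1} / e_k` at a fixed sum of the sizes. Replacing two sizes
differing by at least two by sizes one closer keeps their sum and increases their product, which
increases the ratio because the sequence `e_k` is log-concave. The maximum is hence attained when
all sizes differ by at most one, that is, at the class sizes of the Turán graph, for which `e_k`
counts the `k`-cliques.
-/

section ElementarySymmetric

variable {R : Type*} [CommSemiring R]

theorem esymm_zero_right (s : Multiset R) : s.esymm 0 = 1 := by
  simp [Multiset.esymm]

theorem esymm_cons_succ (a : R) (s : Multiset R) (k : ℕ) :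
    (a ::ₘ s).esymm (k + 1) = s.esymm (k + 1) + a * s.esymm k := by
  simp [Multiset.esymm, Multiset.powersetCard_cons, Multiset.sum_map_mul_left]

theorem esymm_cons_cons_one (a b : R) (s : Multiset R) :
    (a ::ₘ b ::ₘ s).esymm 1 = s.esymm 1 + (a + b) := by
  rw [esymm_cons_succ, esymm_cons_succ, esymm_zero_right, esymm_zero_right]
  ring

theorem esymm_cons_cons_add_two (a b : R) (s : Multiset R) (k : ℕ) :
    (a ::ₘ b ::ₘ s).esymm (k + 2) =
      s.esymm (k + 2) + (a + b) * s.esymm (k + 1) + a * b * s.esymm k := by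
  simp only [esymm_cons_succ]
  ring

variable [PartialOrder R] [IsOrderedRing R] [CanonicallyOrderedAdd R]

theorem esymm_mul_esymm_succ_le (s : Multiset R) {i j : ℕ} (hij : i ≤ j) :
    s.esymm i * s.esymm (j + 1) ≤ s.esymm (i + 1) * s.esymm j := by
  induction s using Multiset.induction generalizing i j with
  | empty => simp [Multiset.esymm, Multiset.powersetCard_zero_right]
  | cons a s ih =>
    obtain rfl | hlt := hij.eq_or_lt
    · rw [mul_comm]
    obtain ⟨j, rfl⟩ := Nat.exists_eq_succ_of_ne_zero hlt.ne_bot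
    cases i with
    | zero =>
      have hj : s.esymm (j + 2) ≤ s.esymm 1 * s.esymm (j + 1) := by
        simpa [esymm_zero_right] using ih (Nat.zero_le (j + 1))
      simp only [esymm_zero_right, esymm_cons_succ, one_mul, mul_one, Nat.succ_eq_add_one]
      calc
        _ ≤ s.esymm 1 * s.esymm (j + 1) + a * s.esymm (j + 1) := by gcongr
        _ = (s.esymm 1 + a) * s.esymm (j + 1) := by ring
        _ ≤ _ := by gcongr; exact le_self_add
    | succ i =>
      have lower : s.esymm i * s.esymm (j + 1) ≤ s.esymm (i + 1) * s.esymm j := ih (by lia)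
      have upper : s.esymm (i + 1) * s.esymm (j + 2) ≤ s.esymm (i + 2) * s.esymm (j + 1) :=
        ih (by lia)
      have outer : s.esymm i * s.esymm (j + 2) ≤ s.esymm (i + 2) * s.esymm j :=
        (ih (by lia)).trans (ih (by lia))
      simp only [esymm_cons_succ, Nat.succ_eq_add_one]
      calc
        _ = s.esymm (i + 1) * s.esymm (j + 2) + a * (s.esymm i * s.esymm (j + 2))
            + a * (s.esymm (i + 1) * s.esymm (j + 1)) + a ^ 2 * (s.esymm i * s.esymm (j + 1)) := by
          ring
        _ ≤ s.esymm (i + 2) * s.esymm (j + 1) + a * (s.esymm (i + 2) * s.esymm j)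
            + a * (s.esymm (i + 1) * s.esymm (j + 1)) + a ^ 2 * (s.esymm (i + 1) * s.esymm j) := by
          gcongr ?_ + _ * ?_ + _ + _ * ?_
        _ = _ := by ring

theorem esymm_succ_eq_zero {s : Multiset R} {k : ℕ} (h : s.esymm k = 0) :
    s.esymm (k + 1) = 0 := by
  simpa [esymm_zero_right, h] using esymm_mul_esymm_succ_le s (Nat.zero_le k)

theorem esymm_cons_cons_le {a b a' b' : R} (hadd : a + b = a' + b') (hmul : a * b ≤ a' * b')
    (s : Multiset R) (k : ℕ) :
    (a ::ₘ b ::ₘ s).esymm k ≤ (a' ::ₘ b' ::ₘ s).esymm k := by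
  match k with
  | 0 => simp only [esymm_zero_right, le_refl]
  | 1 => rw [esymm_cons_cons_one, esymm_cons_cons_one, hadd]
  | k + 2 =>
    rw [esymm_cons_cons_add_two, esymm_cons_cons_add_two, hadd]
    gcongr

theorem esymm_cons_cons_add_three_mul_le (a b : R) (s : Multiset R) (k : ℕ) :
    (a ::ₘ b ::ₘ s).esymm (k + 3) * s.esymm k ≤
      (a ::ₘ b ::ₘ s).esymm (k + 2) * s.esymm (k + 1) := by
  have far : s.esymm k * s.esymm (k + 3) ≤ s.esymm (k + 1) * s.esymm (k + 2) :=
    esymm_mul_esymm_succ_le s (by lia)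
  have near : s.esymm k * s.esymm (k + 2) ≤ s.esymm (k + 1) * s.esymm (k + 1) :=
    esymm_mul_esymm_succ_le s (by lia)
  rw [esymm_cons_cons_add_two, esymm_cons_cons_add_two]
  calc
    _ = s.esymm k * s.esymm (k + 3) + (a + b) * (s.esymm k * s.esymm (k + 2))
        + a * b * (s.esymm k * s.esymm (k + 1)) := by ring
    _ ≤ s.esymm (k + 1) * s.esymm (k + 2) + (a + b) * (s.esymm (k + 1) * s.esymm (k + 1))
        + a * b * (s.esymm k * s.esymm (k + 1)) := by
      gcongr ?_ + _ * ?_ + _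
    _ = _ := by ring

theorem esymm_cons_cons_succ_mul_le {a b a' b' : R} (hadd : a + b = a' + b')
    (hmul : a * b ≤ a' * b') (s : Multiset R) (k : ℕ) :
    (a ::ₘ b ::ₘ s).esymm (k + 1) * (a' ::ₘ b' ::ₘ s).esymm k ≤
      (a ::ₘ b ::ₘ s).esymm k * (a' ::ₘ b' ::ₘ s).esymm (k + 1) := by
  match k with
  | 0 =>
    simp only [esymm_zero_right, mul_one, one_mul]
    exact esymm_cons_cons_le hadd hmul s 1
  | 1 =>
    rw [esymm_cons_cons_one, esymm_cons_cons_one, ← hadd, mul_comm]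
    gcongr _ * ?_
    exact esymm_cons_cons_le hadd hmul s 2
  | k + 2 =>
    obtain ⟨d, hd⟩ := exists_add_of_le hmul
    have shifted := esymm_cons_cons_add_three_mul_le a b s k
    have perturb (m : ℕ) : (a' ::ₘ b' ::ₘ s).esymm (m + 2) =
        (a ::ₘ b ::ₘ s).esymm (m + 2) + d * s.esymm m := by
      rw [esymm_cons_cons_add_two, esymm_cons_cons_add_two, ← hadd, hd]
      ring
    rw [perturb k, perturb (k + 1)]
    calc
      _ = (a ::ₘ b ::ₘ s).esymm (k + 2) * (a ::ₘ b ::ₘ s).esymm (k + 3)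
          + d * ((a ::ₘ b ::ₘ s).esymm (k + 3) * s.esymm k) := by ring
      _ ≤ (a ::ₘ b ::ₘ s).esymm (k + 2) * (a ::ₘ b ::ₘ s).esymm (k + 3)
          + d * ((a ::ₘ b ::ₘ s).esymm (k + 2) * s.esymm (k + 1)) := by gcongr
      _ = _ := by ring

end ElementarySymmetric

section Equitable

theorem cross_mul_le_trans {R : Type*} [CommSemiring R] [LinearOrder R] [IsStrictOrderedRing R]
    [CanonicallyOrderedAdd R] {a a' b b' c c' : R} (hab : a' * b ≤ a * b')
    (hbc : b' * c ≤ b * c') (h : b = 0 → a' = 0) : a' * c ≤ a * c' := by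
  obtain rfl | hb := eq_zero_or_pos b
  · simp [h rfl]
  refine le_of_mul_le_mul_left ?_ hb
  calc
    b * (a' * c) = a' * b * c := by ring
    _ ≤ a * b' * c := by gcongr
    _ = a * (b' * c) := by ring
    _ ≤ a * (b * c') := by gcongr
    _ = b * (a * c') := by ring

/-- The entries of `s` pairwise differ by at most one, as do the part sizes of a Turán graph. -/
def IsEquitable (s : Multiset ℕ) : Prop :=
  ∀ x ∈ s, ∀ y ∈ s, x ≤ y + 1

theorem IsEquitable.eq_replicate_add_replicate {s : Multiset ℕ} (hs : IsEquitable s) :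
    s = Multiset.replicate (s.card - s.sum % s.card) (s.sum / s.card) +
      Multiset.replicate (s.sum % s.card) (s.sum / s.card + 1) := by
  obtain rfl | hne := eq_or_ne s 0
  · simp
  obtain ⟨q, hqs, hq⟩ : ∃ q ∈ s, ∀ x ∈ s, q ≤ x := by
    obtain ⟨q, hq, hmin⟩ := s.toFinset.exists_min_image id
      (Multiset.toFinset_nonempty.mpr hne)
    exact ⟨q, by simpa using hq, by simpa using hmin⟩
  obtain ⟨j, hj⟩ : ∃ j, s.filter (¬ · = q) = Multiset.replicate j (q + 1) := by
    refine ⟨_, Multiset.eq_replicate_of_mem fun x hx ↦ ?_⟩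
    obtain ⟨hxs, hxq⟩ := Multiset.mem_filter.mp hx
    have := hq x hxs
    have := hs x hxs q hqs
    lia
  have hdecomp : s = Multiset.replicate (s.count q) q + Multiset.replicate j (q + 1) := by
    rw [← hj, ← Multiset.filter_eq', Multiset.filter_add_not]
  have hcard : s.card = s.count q + j := by
    simpa using congrArg Multiset.card hdecomp
  have hsum : j + s.card * q = s.sum := by
    have := congrArg Multiset.sum hdecomp
    simp only [Multiset.sum_add, Multiset.sum_replicate, smul_eq_mul] at this
    rw [this, hcard]
    ring
  have hpos : 0 < s.count q := Multiset.count_pos.mpr hqs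
  obtain ⟨hdiv, hmod⟩ :=
    (Nat.div_mod_unique (by lia : 0 < s.card)).mpr ⟨hsum, (by lia : j < s.card)⟩
  rw [hdiv, hmod, hcard, Nat.add_sub_cancel]
  exact hdecomp

theorem IsEquitable.eq_of_card_eq_of_sum_eq {s t : Multiset ℕ} (hs : IsEquitable s)
    (ht : IsEquitable t) (hcard : s.card = t.card) (hsum : s.sum = t.sum) : s = t := by
  rw [hs.eq_replicate_add_replicate, ht.eq_replicate_add_replicate, hcard, hsum]

theorem exists_eq_cons_cons_of_not_isEquitable {s : Multiset ℕ} (hs : ¬ IsEquitable s) :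
    ∃ (x y : ℕ) (t : Multiset ℕ), s = (x + y + 2) ::ₘ y ::ₘ t := by
  simp only [IsEquitable, not_forall, not_le] at hs
  obtain ⟨z, hz, y, hy, hyz⟩ := hs
  obtain ⟨x, rfl⟩ : ∃ x, z = x + y + 2 := ⟨z - y - 2, by lia⟩
  obtain ⟨s, rfl⟩ := Multiset.exists_cons_of_mem hz
  obtain ⟨t, rfl⟩ := Multiset.exists_cons_of_mem
    ((Multiset.mem_cons.mp hy).resolve_left (by lia))
  exact ⟨x, y, t, rfl⟩

theorem IsEquitable.esymm_succ_mul_le {s t : Multiset ℕ} (ht : IsEquitable t)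
    (hcard : s.card = t.card) (hsum : s.sum = t.sum) (k : ℕ) :
    s.esymm (k + 1) * t.esymm k ≤ s.esymm k * t.esymm (k + 1) := by
  induction hN : (s.map (· ^ 2)).sum using Nat.strong_induction_on generalizing s with
  | _ N ih =>
    by_cases hs : IsEquitable s
    · rw [hs.eq_of_card_eq_of_sum_eq ht hcard hsum, mul_comm]
    obtain ⟨x, y, u, rfl⟩ := exists_eq_cons_cons_of_not_isEquitable hs
    set s' := (x + y + 1) ::ₘ (y + 1) ::ₘ u
    have hadd : x + y + 2 + y = (x + y + 1) + (y + 1) := by ring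
    have hmul : (x + y + 2) * y ≤ (x + y + 1) * (y + 1) := by nlinarith
    have hcard' : s'.card = t.card := by simpa [s'] using hcard
    have hsum' : s'.sum = t.sum := by
      simp only [s', Multiset.sum_cons] at hsum ⊢
      lia
    have hsq : (s'.map (· ^ 2)).sum < N := by
      simp only [s', Multiset.map_cons, Multiset.sum_cons] at hN ⊢
      nlinarith
    refine cross_mul_le_trans (esymm_cons_cons_succ_mul_le hadd hmul u k)
      (ih _ hsq hcard' hsum' rfl) fun h ↦ Nat.eq_zero_of_le_zero ?_
    exact (esymm_cons_cons_le hadd hmul u (k + 1)).trans_eq (esymm_succ_eq_zero h)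

end Equitable

open Finset

section Exchange

variable {ι K : Type*} [DecidableEq ι] [Semifield K]

theorem sum_sdiff_div_card [CharZero K] {S T : Finset ι} (h : #S < #T) (x : K) :
    ∑ _i ∈ T \ S, x / #(T \ S) = x := by
  have : (#(T \ S) : K) ≠ 0 := by
    have := le_card_sdiff S T
    exact_mod_cast (by lia : #(T \ S) ≠ 0)
  rw [sum_const, nsmul_eq_mul, mul_div_cancel₀ _ this]

variable [Fintype ι]

theorem sum_powersetCard_succ_sum_sdiff_div_card (h : Finset ι → Finset ι → K) (k : ℕ) :
    ∑ S ∈ powersetCard (k + 1) univ, ∑ T ∈ powersetCard k univ,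
        ∑ i ∈ S \ T, h (S.erase i) (insert i T) / #(S \ T) =
      ∑ S ∈ powersetCard k univ, ∑ T ∈ powersetCard (k + 1) univ,
        ∑ _i ∈ T \ S, h S T / #(T \ S) := by
  simp_rw [← sum_product', sum_sigma']
  refine sum_bij' (fun x _ ↦ ⟨(x.1.1.erase x.2, insert x.2 x.1.2), x.2⟩)
    (fun x _ ↦ ⟨(insert x.2 x.1.1, x.1.2.erase x.2), x.2⟩) ?_ ?_ ?_ ?_ ?_
  all_goals
    rintro ⟨⟨S, T⟩, i⟩ hx
    simp only [mem_sigma, mem_product, mem_powersetCard_univ, mem_sdiff] at hx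
    obtain ⟨⟨hS, hT⟩, hi⟩ := hx
  · simp [hi, hS, hT]
  · simp [hi, hS, hT]
  · simp [hi]
  · simp [hi]
  · have hsdiff : insert i T \ S.erase i = insert i (T \ S) := by grind
    have hweight : #(insert i T \ S.erase i) = #(S \ T) := by
      have hST := card_sdiff_add_card_inter S T
      have hTS := card_sdiff_add_card_inter T S
      rw [inter_comm] at hTS
      rw [hsdiff, card_insert_of_notMem (by simp [hi])]
      lia
    simp only [hweight]

theorem sum_powersetCard_succ_mul_le [LinearOrder K] [IsStrictOrderedRing K]
    {a : ι → K} {N : Finset ι → K} (ha : ∀ i, 0 ≤ a i)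
    (hN : ∀ T, ∀ i ∉ T, N (insert i T) ≤ a i * N T) (k : ℕ) :
    (∑ S ∈ powersetCard (k + 1) univ, N S) * ∑ T ∈ powersetCard k univ, ∏ i ∈ T, a i ≤
      (∑ S ∈ powersetCard k univ, N S) * ∑ T ∈ powersetCard (k + 1) univ, ∏ i ∈ T, a i := by
  have swap_le {S T : Finset ι} {i : ι} (hi : i ∈ S \ T) :
      N S * ∏ j ∈ T, a j ≤ N (S.erase i) * ∏ j ∈ insert i T, a j := by
    rw [mem_sdiff] at hi
    have hNS : N S ≤ a i * N (S.erase i) := by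
      simpa [insert_erase hi.1] using hN (S.erase i) i (by simp)
    rw [prod_insert hi.2]
    exact (mul_le_mul_of_nonneg_right hNS (prod_nonneg fun j _ ↦ ha j)).trans_eq (by ring)
  rw [sum_mul_sum, sum_mul_sum]
  calc
    _ = ∑ S ∈ powersetCard (k + 1) univ, ∑ T ∈ powersetCard k univ,
          ∑ _i ∈ S \ T, N S * (∏ j ∈ T, a j) / #(S \ T) := by
      refine sum_congr rfl fun S hS ↦ sum_congr rfl fun T hT ↦ (sum_sdiff_div_card ?_ _).symm
      rw [mem_powersetCard_univ] at hS hT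
      lia
    _ ≤ ∑ S ∈ powersetCard (k + 1) univ, ∑ T ∈ powersetCard k univ,
          ∑ i ∈ S \ T, N (S.erase i) * (∏ j ∈ insert i T, a j) / #(S \ T) := by
      gcongr ∑ S ∈ _, ∑ T ∈ _, ∑ i ∈ _, ?_ / _ with S _ T _ i hi
      exact swap_le hi
    _ = ∑ S ∈ powersetCard k univ, ∑ T ∈ powersetCard (k + 1) univ,
          ∑ _i ∈ T \ S, N S * (∏ j ∈ T, a j) / #(T \ S) :=
      sum_powersetCard_succ_sum_sdiff_div_card (fun S T ↦ N S * ∏ j ∈ T, a j) k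
    _ = _ := by
      refine sum_congr rfl fun S hS ↦ sum_congr rfl fun T hT ↦ sum_sdiff_div_card ?_ _
      rw [mem_powersetCard_univ] at hS hT
      lia

end Exchange

section Coloring

variable {V ι : Type*} [DecidableEq ι]

/-- The flag `f`-vector: the number of faces of `Δ` whose set of colors under `c` is `T`. -/
def flagCount (Δ : Finset (Finset V)) (c : V → ι) (T : Finset ι) : ℕ :=
  #{F ∈ Δ | F.image c = T}

theorem faceCount_eq_sum_flagCount [DecidableEq V] [Fintype ι] {Δ : Finset (Finset V)} {c : V → ι}
    (hc : ∀ F ∈ Δ, Set.InjOn c F) (k : ℕ) :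
    faceCount Δ k = ∑ T ∈ powersetCard k univ, flagCount Δ c T := by
  have hcard : ∀ F ∈ Δ, #(F.image c) = #F := fun F hF ↦ card_image_of_injOn (hc F hF)
  rw [faceCount, card_eq_sum_card_fiberwise (f := image c) (t := powersetCard k univ)]
  · refine sum_congr rfl fun T hT ↦ congrArg card ?_
    rw [mem_powersetCard_univ] at hT
    grind
  · intro F hF
    grind [mem_powersetCard_univ]

theorem flagCount_insert_le [Fintype V] {Δ : Finset (Finset V)} {c : V → ι}
    (hΔ : IsLowerSet (Δ : Set (Finset V))) (hc : ∀ F ∈ Δ, Set.InjOn c F)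
    {T : Finset ι} {i : ι} (hi : i ∉ T) :
    flagCount Δ c (insert i T) ≤ #{v | c v = i} * flagCount Δ c T := by
  classical
  rw [flagCount, flagCount, ← card_product]
  refine card_le_card_of_surjOn (fun p ↦ insert p.1 p.2) fun F hF ↦ ?_
  obtain ⟨hFΔ, hFT⟩ := mem_filter.mp hF
  obtain ⟨v, hv, rfl⟩ := mem_image.mp (hFT ▸ mem_insert_self i T : i ∈ F.image c)
  have himage : (F.erase v).image c = T := by
    rw [← sdiff_singleton_eq_erase, image_sdiff_of_injOn (hc F hFΔ) (by simpa using hv), hFT,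
      image_singleton, sdiff_singleton_eq_erase, erase_insert hi]
  refine ⟨(v, F.erase v), ?_, insert_erase hv⟩
  have : F.erase v ∈ Δ := hΔ (erase_subset v F) hFΔ
  simp [himage, this]

variable [Fintype V]

/-- The complex of all vertex sets with pairwise distinct colors, that is, the clique complex of
the complete multipartite graph whose parts are the color classes of `c`. -/
def rainbowComplex (c : V → ι) : Finset (Finset V) :=
  {F | Set.InjOn c F}

theorem mem_rainbowComplex {c : V → ι} {F : Finset V} :
    F ∈ rainbowComplex c ↔ Set.InjOn c F := by
  simp [rainbowComplex]

theorem isLowerSet_rainbowComplex (c : V → ι) :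
    IsLowerSet (rainbowComplex c : Set (Finset V)) := by
  intro F G hGF hF
  simp only [mem_coe, mem_rainbowComplex] at hF ⊢
  exact hF.mono hGF

theorem flagCount_rainbowComplex_insert (c : V → ι) {T : Finset ι} {i : ι} (hi : i ∉ T) :
    flagCount (rainbowComplex c) c (insert i T) =
      #{v | c v = i} * flagCount (rainbowComplex c) c T := by
  classical
  refine (flagCount_insert_le (isLowerSet_rainbowComplex c)
    (fun _ ↦ mem_rainbowComplex.mp) hi).antisymm ?_
  rw [flagCount, flagCount, ← card_product]
  have notMem {v : V} {F : Finset V} (hv : c v = i) (hF : F.image c = T) : v ∉ F :=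
    fun h ↦ hi (hF ▸ hv ▸ mem_image_of_mem c h)
  refine card_le_card_of_injOn (fun p ↦ insert p.1 p.2) ?_ ?_
  · rintro ⟨v, F⟩ hp
    simp only [coe_product, Set.mem_prod, mem_coe, mem_filter, mem_univ, true_and,
      mem_rainbowComplex] at hp ⊢
    obtain ⟨rfl, hF, rfl⟩ := hp
    rw [coe_insert, Set.injOn_insert (mod_cast notMem rfl rfl), image_insert]
    exact ⟨⟨hF, mod_cast hi⟩, rfl⟩
  · rintro ⟨v, F⟩ hp ⟨w, G⟩ hq h
    simp only [coe_product, Set.mem_prod, mem_coe, mem_filter, mem_univ, true_and] at hp hq h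
    obtain rfl : v = w :=
      (mem_insert.mp (h ▸ mem_insert_self v F)).resolve_right (notMem hp.1 hq.2.2)
    rw [← erase_insert (notMem hp.1 hp.2.2), h, erase_insert (notMem hp.1 hq.2.2)]

theorem flagCount_rainbowComplex (c : V → ι) (T : Finset ι) :
    flagCount (rainbowComplex c) c T = ∏ i ∈ T, #{v | c v = i} := by
  induction T using Finset.induction_on with
  | empty =>
    have : ({F ∈ rainbowComplex c | F.image c = ∅} : Finset (Finset V)) = {∅} := by
      ext F
      simp +contextual [mem_rainbowComplex]
    rw [flagCount, this, card_singleton, prod_empty]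
  | insert i T hi ih => rw [flagCount_rainbowComplex_insert c hi, prod_insert hi, ih]

variable [Fintype ι]

/-- The multiset of sizes of the color classes of `c`, counting a zero for each unused color. -/
def colorClassSizes (c : V → ι) : Multiset ℕ :=
  univ.val.map fun i ↦ #{v | c v = i}

theorem card_colorClassSizes (c : V → ι) : (colorClassSizes c).card = Fintype.card ι := by
  simp [colorClassSizes]

theorem sum_colorClassSizes (c : V → ι) : (colorClassSizes c).sum = Fintype.card V :=
  (card_eq_sum_card_fiberwise fun v _ ↦ mem_univ (c v)).symm

theorem faceCount_rainbowComplex [DecidableEq V] (c : V → ι) (k : ℕ) :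
    faceCount (rainbowComplex c) k = (colorClassSizes c).esymm k := by
  rw [faceCount_eq_sum_flagCount fun _ ↦ mem_rainbowComplex.mp, colorClassSizes, esymm_map_val]
  exact sum_congr rfl fun T _ ↦ flagCount_rainbowComplex c T

theorem faceCount_succ_mul_esymm_le [DecidableEq V] {Δ : Finset (Finset V)} {c : V → ι}
    (hΔ : IsLowerSet (Δ : Set (Finset V))) (hc : ∀ F ∈ Δ, Set.InjOn c F) (k : ℕ) :
    faceCount Δ (k + 1) * (colorClassSizes c).esymm k ≤
      faceCount Δ k * (colorClassSizes c).esymm (k + 1) := by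
  have hN (T : Finset ι) (i : ι) (hi : i ∉ T) :
      (flagCount Δ c (insert i T) : ℚ) ≤ #{v | c v = i} * flagCount Δ c T :=
    mod_cast flagCount_insert_le hΔ hc hi
  have exchange := sum_powersetCard_succ_mul_le (a := fun i ↦ (#{v | c v = i} : ℚ))
    (fun _ ↦ Nat.cast_nonneg _) hN k
  simp only [faceCount_eq_sum_flagCount hc, colorClassSizes, esymm_map_val]
  exact_mod_cast exchange

theorem faceCount_le_esymm_colorClassSizes [DecidableEq V] {Δ : Finset (Finset V)} {c : V → ι}
    (hc : ∀ F ∈ Δ, Set.InjOn c F) (k : ℕ) :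
    faceCount Δ k ≤ (colorClassSizes c).esymm k := by
  rw [← faceCount_rainbowComplex]
  exact card_le_card <| filter_subset_filter _ fun F hF ↦ mem_rainbowComplex.mpr (hc F hF)

theorem cliqueCount_eq_esymm_colorClassSizes {G : SimpleGraph V} {c : V → ι}
    (h : ∀ v w, G.Adj v w ↔ c v ≠ c w) (k : ℕ) :
    cliqueCount G k = (colorClassSizes c).esymm k := by
  classical
  rw [← faceCount_rainbowComplex, cliqueCount, faceCount, ← Set.ncard_coe_finset]
  congr 1
  ext F
  simp only [SimpleGraph.isNClique_iff, SimpleGraph.isClique_iff, Set.Pairwise, h,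
    Set.mem_ofPred_eq, coe_filter, mem_rainbowComplex, and_congr_left_iff, Set.InjOn]
  grind

end Coloring

section TuranGraph

/-- The coloring of `Fin n` by residues modulo `r`, whose color classes are the parts of
`SimpleGraph.turanGraph n r`. -/
def turanColoring (n r : ℕ) [NeZero r] (v : Fin n) : Fin r :=
  Fin.ofNat r v

variable (n r : ℕ) [NeZero r]

theorem turanGraph_adj_iff_turanColoring_ne (v w : Fin n) :
    (SimpleGraph.turanGraph n r).Adj v w ↔ turanColoring n r v ≠ turanColoring n r w := by
  simp [SimpleGraph.turanGraph, turanColoring, Fin.ext_iff]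

theorem turanCount_eq_esymm_colorClassSizes (k : ℕ) :
    turanCount n r k = (colorClassSizes (turanColoring n r)).esymm k :=
  cliqueCount_eq_esymm_colorClassSizes (turanGraph_adj_iff_turanColoring_ne n r) k

theorem card_filter_turanColoring_eq (i : Fin r) :
    #{v | turanColoring n r v = i} = n / r + if (i : ℕ) < n % r then 1 else 0 := by
  have hcount := Nat.count_modEq_card n (NeZero.pos r) i
  rw [Nat.mod_eq_of_lt i.isLt] at hcount
  rw [← hcount, Nat.count_eq_card_filter_range, ← Nat.Iio_eq_range, ← Fin.map_valEmbedding_univ,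
    filter_map, card_map]
  congr! 2
  simp [turanColoring, Fin.ext_iff, Nat.ModEq, Nat.mod_eq_of_lt]

theorem isEquitable_colorClassSizes_turanColoring :
    IsEquitable (colorClassSizes (turanColoring n r)) := by
  simp only [IsEquitable, colorClassSizes, Multiset.mem_map, forall_exists_index, and_imp,
    forall_apply_eq_imp_iff₂, card_filter_turanColoring_eq]
  intro i _ j _
  split_ifs <;> lia

end TuranGraph

theorem injOn_of_coloring_underlyingGraph {V ι : Type*} [DecidableEq V] {Δ : Finset (Finset V)}
    (hΔ : IsLowerSet (Δ : Set (Finset V))) (c : (underlyingGraph Δ).Coloring ι) {F : Finset V}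
    (hF : F ∈ Δ) : Set.InjOn c F := by
  intro x hx y hy hxy
  by_contra hne
  have hedge : {x, y} ∈ Δ := hΔ (insert_subset hx (singleton_subset_iff.mpr hy)) hF
  exact c.valid ⟨hne, hedge⟩ hxy

theorem faceCount_ratio_le_turan_general {V : Type*} [Fintype V] [DecidableEq V]
    {Δ : Finset (Finset V)} (hΔ : IsLowerSet (Δ : Set (Finset V))) {r : ℕ} (hr : 0 < r)
    (hcol : (underlyingGraph Δ).Colorable r) (k : ℕ) :
    faceCount Δ (k + 1) * turanCount (Fintype.card V) r k ≤
      faceCount Δ k * turanCount (Fintype.card V) r (k + 1) := by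
  obtain ⟨c⟩ := hcol
  have : NeZero r := ⟨hr.ne'⟩
  have hc : ∀ F ∈ Δ, Set.InjOn c F := fun _ ↦ injOn_of_coloring_underlyingGraph hΔ c
  simp only [turanCount_eq_esymm_colorClassSizes]
  refine cross_mul_le_trans (faceCount_succ_mul_esymm_le hΔ hc k)
    ((isEquitable_colorClassSizes_turanColoring _ r).esymm_succ_mul_le ?_ ?_ k) fun h ↦ ?_
  · simp only [card_colorClassSizes]
  · simp only [sum_colorClassSizes, Fintype.card_fin]
  · exact Nat.eq_zero_of_le_zero <|
      (faceCount_le_esymm_colorClassSizes hc (k + 1)).trans_eq (esymm_succ_eq_zero h)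

/-- For every `r`-colorable simplicial complex `Δ` on `n` vertices and every
`2 ≤ k ≤ r`, one has `f_k(Δ) t_{k-1}(n,r) ≤ f_{k-1}(Δ) t_k(n,r)`. -/
theorem faceCount_ratio_le_turan (n r : ℕ) (hn : 0 < n) (hr : 0 < r)
    (Δ : Finset (Finset (Fin n))) (hΔ : IsComplex Δ)
    (hcol : (underlyingGraph Δ).Colorable r)
    (k : ℕ) (hk2 : 2 ≤ k) (hkr : k ≤ r) :
    faceCount Δ k * turanCount n r (k - 1) ≤ faceCount Δ (k - 1) * turanCount n r k := by
  obtain ⟨k, rfl⟩ := Nat.exists_eq_add_of_le' (one_le_two.trans hk2)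
  simpa using faceCount_ratio_le_turan_general (fun F G hGF hF ↦ hΔ.1 F hF G hGF) hr hcol k
end

section
/- Let G be a finite simple graph and let u, v be distinct nonadjacent vertices of G. Then for every k ≥ 1, c_k(G_{u→v}) = c_k(G) − c_{k-1}(G[N(u)]) + c_{k-1}(G[N(v)]), where G[N(w)] denotes the subgraph of G induced on the neighborhood of w. -/
/-- The graph `G_{u→v}`: delete all edges incident to `u` and join `u` to every
neighbor of `v` in `G`. -/
def redirect {V : Type*} (G : SimpleGraph V) (u v : V) : SimpleGraph V where
  Adj x y :=
    (x ≠ u ∧ y ≠ u ∧ G.Adj x y) ∨ (x = u ∧ y ≠ u ∧ G.Adj v y) ∨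
      (y = u ∧ x ≠ u ∧ G.Adj v x)
  symm := by
    constructor
    rintro x y (⟨h1, h2, h3⟩ | ⟨h1, h2, h3⟩ | ⟨h1, h2, h3⟩)
    · exact Or.inl ⟨h2, h1, h3.symm⟩
    · exact Or.inr (Or.inr ⟨h1, h2, h3⟩)
    · exact Or.inr (Or.inl ⟨h1, h2, h3⟩)
  loopless := by
    constructor
    rintro x (⟨h1, h2, h3⟩ | ⟨h1, h2, h3⟩ | ⟨h1, h2, h3⟩)
    · exact G.loopless.irrefl x h3
    · exact h2 h1
    · exact h2 h1

section CliqueSet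

variable {V : Type*} (G : SimpleGraph V)

theorem cast_cliqueCount [Finite V] (k : ℕ) :
    (cliqueCount G k : ℕ∞) = (G.cliqueSet k).encard :=
  (Set.toFinite _).cast_ncard_eq

theorem image_map_subtype_cliqueSet_induce (S : Set V) (k : ℕ) :
    Finset.map (.subtype (· ∈ S)) '' (G.induce S).cliqueSet k =
      {s ∈ G.cliqueSet k | (s : Set V) ⊆ S} := by
  classical
  ext s
  constructor
  · rintro ⟨t, ht, rfl⟩
    exact ⟨(G.isNClique_induce_iff S t k).1 ht, by simp⟩
  · rintro ⟨hs, hsS⟩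
    have hmap : (s.subtype (· ∈ S)).map (.subtype (· ∈ S)) = s :=
      Finset.subtype_map_of_mem hsS
    exact ⟨s.subtype (· ∈ S), (G.isNClique_induce_iff S _ k).2 (hmap.symm ▸ hs), hmap⟩

theorem encard_cliqueSet_induce (S : Set V) (k : ℕ) :
    ((G.induce S).cliqueSet k).encard = {s ∈ G.cliqueSet k | (s : Set V) ⊆ S}.encard := by
  rw [← image_map_subtype_cliqueSet_induce, (Finset.map_injective _).encard_image]

theorem image_insert_cliqueSet_neighborSet [DecidableEq V] (w : V) (k : ℕ) :
    insert w '' {s ∈ G.cliqueSet k | (s : Set V) ⊆ G.neighborSet w} =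
      {s ∈ G.cliqueSet (k + 1) | w ∈ s} := by
  ext s
  constructor
  · rintro ⟨t, ⟨ht, htw⟩, rfl⟩
    exact ⟨ht.insert htw, Finset.mem_insert_self w t⟩
  · rintro ⟨hs, hw⟩
    have hadj : ((s.erase w : Finset V) : Set V) ⊆ G.neighborSet w := fun x hx =>
      hs.isClique hw (Finset.mem_of_mem_erase hx) (Finset.ne_of_mem_erase hx).symm
    exact ⟨s.erase w, ⟨hs.erase_of_mem hw, hadj⟩, Finset.insert_erase hw⟩

theorem encard_cliqueSet_induce_neighborSet (w : V) (k : ℕ) :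
    ((G.induce (G.neighborSet w)).cliqueSet k).encard =
      {s ∈ G.cliqueSet (k + 1) | w ∈ s}.encard := by
  classical
  have hinj : Set.InjOn (insert w) {s ∈ G.cliqueSet k | (s : Set V) ⊆ G.neighborSet w} :=
    (Finset.insert_erase_invOn (a := w)).2.injOn.mono fun _ hs hw => G.irrefl (hs.2 hw)
  rw [encard_cliqueSet_induce, ← image_insert_cliqueSet_neighborSet, hinj.encard_image]

theorem encard_cliqueSet_succ (w : V) (k : ℕ) :
    (G.cliqueSet (k + 1)).encard =
      ((G.induce {w}ᶜ).cliqueSet (k + 1)).encard +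
        ((G.induce (G.neighborSet w)).cliqueSet k).encard := by
  have hsdiff : {s ∈ G.cliqueSet (k + 1) | (s : Set V) ⊆ {w}ᶜ} =
      G.cliqueSet (k + 1) \ {s | w ∈ s} := by
    ext s
    simp only [Set.mem_ofPred_eq, Set.mem_sdiff, Set.subset_compl_singleton_iff, Finset.mem_coe]
  rw [encard_cliqueSet_induce, hsdiff, encard_cliqueSet_induce_neighborSet]
  exact (Set.encard_sdiff_add_encard_inter _ _).symm

end CliqueSet

section Redirect

variable {V : Type*} (G : SimpleGraph V) (u v : V)

theorem neighborSet_redirect_self :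
    (redirect G u v).neighborSet u = G.neighborSet v \ {u} := by
  ext x
  simp [redirect, and_comm]

variable {u} in
theorem induce_redirect_of_notMem {S : Set V} (hu : u ∉ S) :
    (redirect G u v).induce S = G.induce S := by
  ext ⟨x, hx⟩ ⟨y, hy⟩
  simp [redirect, ne_of_mem_of_not_mem hx hu, ne_of_mem_of_not_mem hy hu]

theorem cliqueCount_redirect_general (k : ℕ) :
    ((redirect G u v).cliqueSet (k + 1)).encard +
        ((G.induce (G.neighborSet u)).cliqueSet k).encard =
      (G.cliqueSet (k + 1)).encard +
        ((G.induce (G.neighborSet v \ {u})).cliqueSet k).encard := by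
  rw [encard_cliqueSet_succ (redirect G u v) u, encard_cliqueSet_succ G u,
    neighborSet_redirect_self, induce_redirect_of_notMem G v (by simp),
    induce_redirect_of_notMem G v (by simp), add_right_comm]

end Redirect

/-- For a finite graph `G` with distinct nonadjacent vertices `u, v` and any `k ≥ 1`,
`c_k(G_{u→v}) = c_k(G) − c_{k-1}(G[N(u)]) + c_{k-1}(G[N(v)])`, where `G[N(w)]` is the
subgraph of `G` induced on the neighborhood of `w`. -/
theorem cliqueCount_redirect {V : Type*} [Fintype V] [DecidableEq V]
    (G : SimpleGraph V) (u v : V) (huv : u ≠ v) (hadj : ¬ G.Adj u v)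
    (k : ℕ) (hk : 1 ≤ k) :
    (cliqueCount (redirect G u v) k : ℤ) =
      (cliqueCount G k : ℤ) -
        cliqueCount (G.induce (G.neighborSet u)) (k - 1) +
        cliqueCount (G.induce (G.neighborSet v)) (k - 1) := by
  have hu : u ∉ G.neighborSet v := mt G.adj_symm hadj
  have hcount := cliqueCount_redirect_general G u v (k - 1)
  rw [Nat.sub_add_cancel hk, Set.sdiff_singleton_eq_self hu] at hcount
  simp only [← cast_cliqueCount] at hcount
  norm_cast at hcount
  lia
end

section
/- Let Δ be an r-colorable simplicial complex and let u, v be distinct vertices of Δ such that {u, v} is not a face of Δ. Then the simplicial complex Δ_{u→v} is r-colorable. -/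
/-- The link of a vertex `v` in `Δ`: all faces `F ∈ Δ` with `v ∉ F` and `F ∪ {v} ∈ Δ`. -/
def link {V : Type*} [DecidableEq V] (Δ : Finset (Finset V)) (v : V) :
    Finset (Finset V) :=
  Δ.filter fun F => v ∉ F ∧ insert v F ∈ Δ

/-- The complex `Δ_{u→v}`: remove every face properly containing `{u}` and add the
face `F ∪ {u}` for every face `F` of `link_Δ(v)`. -/
def redirectComplex {V : Type*} [DecidableEq V] (Δ : Finset (Finset V)) (u v : V) :
    Finset (Finset V) :=
  (Δ.filter fun F => u ∉ F ∨ F = {u}) ∪ (link Δ v).image fun F => insert u F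

/-! On underlying graphs, passing from `Δ` to `Δ_{u→v}` makes `u` a copy of `v` that is not adjacent
to `v`, so `u` can be given the color of `v`. -/

/-- The graph homomorphism folding the vertex `t`, a copy of `s` in `G.replaceVertex s t`, onto `s`;
it transports colorings of `G` to `G.replaceVertex s t`. -/
def replaceVertexHom {V : Type*} [DecidableEq V] (G : SimpleGraph V) (s t : V) :
    G.replaceVertex s t →g G where
  toFun := Function.update id t s
  map_rel' {x y} h := by
    by_cases hx : x = t <;> by_cases hy : y = t
    · exact absurd (hx.trans hy.symm) h.ne
    · subst hx
      simpa [hy] using (G.adj_replaceVertex_iff_of_ne_right s hy).1 h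
    · subst hy
      simpa [hx] using ((G.adj_replaceVertex_iff_of_ne_right s hx).1 h.symm).symm
    · simpa [hx, hy] using (G.adj_replaceVertex_iff_of_ne s hx hy).1 h

section

variable {V : Type*} [DecidableEq V] {Δ : Finset (Finset V)} {F : Finset V} {u v y : V}

lemma isLowerSet_link (hΔ : IsLowerSet (Δ : Set (Finset V))) (v : V) :
    IsLowerSet (link Δ v : Set (Finset V)) := by
  intro F G hGF hF
  obtain ⟨hFΔ, hvF, hvFΔ⟩ := Finset.mem_filter.1 hF
  exact Finset.mem_filter.2
    ⟨hΔ hGF hFΔ, fun hvG ↦ hvF (hGF hvG), hΔ (Finset.insert_subset_insert v hGF) hvFΔ⟩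

lemma singleton_mem_link (hΔ : IsLowerSet (Δ : Set (Finset V))) :
    {y} ∈ link Δ v ↔ (underlyingGraph Δ).Adj v y := by
  have singleton_mem (h : {v, y} ∈ Δ) : {y} ∈ Δ := hΔ (Finset.subset_insert v {y}) h
  simpa [link, underlyingGraph] using fun _ ↦ singleton_mem

lemma mem_redirectComplex_of_notMem (hu : u ∉ F) : F ∈ redirectComplex Δ u v ↔ F ∈ Δ := by
  have insert_ne (G : Finset V) : insert u G ≠ F := fun h ↦ hu (h ▸ Finset.mem_insert_self u G)
  simp [redirectComplex, hu, insert_ne]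

lemma insert_mem_redirectComplex (hΔ : IsLowerSet (Δ : Set (Finset V))) (hF : F.Nonempty)
    (hu : u ∉ F) : insert u F ∈ redirectComplex Δ u v ↔ F ∈ link Δ v := by
  have insert_ne : insert u F ≠ {u} := by
    obtain ⟨y, hy⟩ := hF
    intro h
    have hyu : y = u := Finset.mem_singleton.1 (h ▸ Finset.mem_insert_of_mem hy)
    exact hu (hyu ▸ hy)
  have mem_iff : insert u F ∈ redirectComplex Δ u v ↔ ∃ G ∈ link Δ v, insert u G = insert u F := by
    simp [redirectComplex, insert_ne]
  rw [mem_iff]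
  refine ⟨?_, fun h ↦ ⟨F, h, rfl⟩⟩
  rintro ⟨G, hG, hGF⟩
  have hFG : F ⊆ G := (Finset.subset_insert_iff_of_notMem hu).1 (hGF ▸ Finset.subset_insert u F)
  exact isLowerSet_link hΔ v hFG hG

lemma underlyingGraph_redirectComplex (hΔ : IsLowerSet (Δ : Set (Finset V))) (u v : V) :
    underlyingGraph (redirectComplex Δ u v) = (underlyingGraph Δ).replaceVertex v u := by
  have adj_left {y : V} (hy : y ≠ u) : (underlyingGraph (redirectComplex Δ u v)).Adj u y ↔
      ((underlyingGraph Δ).replaceVertex v u).Adj u y := by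
    rw [SimpleGraph.adj_replaceVertex_iff_of_ne_right _ _ hy, ← singleton_mem_link hΔ,
      ← insert_mem_redirectComplex hΔ (Finset.singleton_nonempty y) (by simpa using hy.symm)]
    exact and_iff_right hy.symm
  ext x y
  by_cases hx : x = u <;> by_cases hy : y = u
  · simp [hx, hy]
  · rw [hx, adj_left hy]
  · rw [hy, SimpleGraph.adj_comm, adj_left hx, SimpleGraph.adj_comm]
  · rw [SimpleGraph.adj_replaceVertex_iff_of_ne _ _ hx hy]
    have hu : u ∉ ({x, y} : Finset V) := by simp [Ne.symm hx, Ne.symm hy]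
    exact and_congr_right' (mem_redirectComplex_of_notMem hu)

theorem redirectComplex_colorable_general (hΔ : IsLowerSet (Δ : Set (Finset V))) (u v : V) {r : ℕ}
    (hcol : (underlyingGraph Δ).Colorable r) :
    (underlyingGraph (redirectComplex Δ u v)).Colorable r := by
  rw [underlyingGraph_redirectComplex hΔ]
  exact hcol.of_hom (replaceVertexHom _ v u)

end

/-- If `Δ` is an `r`-colorable simplicial complex and `u, v` are distinct vertices
with `{u,v} ∉ Δ`, then `Δ_{u→v}` is also `r`-colorable. -/
theorem redirectComplex_colorable {V : Type*} [Fintype V] [DecidableEq V]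
    (Δ : Finset (Finset V)) (hΔ : IsComplex Δ) (u v : V) (huv : u ≠ v)
    (hmem : ({u, v} : Finset V) ∉ Δ) (r : ℕ)
    (hcol : (underlyingGraph Δ).Colorable r) :
    (underlyingGraph (redirectComplex Δ u v)).Colorable r :=
  redirectComplex_colorable_general (fun F G hGF hF ↦ hΔ.1 F hF G hGF) u v hcol
end

section
/- Let k ≥ 1 and let Δ be a simplicial complex with a distinguished vertex v₀ satisfying: (i) for every face F of Δ with v₀ ∉ F and every u ∈ F, the set (F \ {u}) ∪ {v₀} is a face of Δ; and (ii) for every set S of cardinality at least k+1, if every proper nonempty subset of S is a face of Δ, then S is a face of Δ. Then every face F of Δ with |F| ≥ k, v₀ ∉ F, all of whose vertices are adjacent to v₀ in the underlying graph of Δ, satisfies F ∪ {v₀} ∈ Δ; that is, every such face of the induced subcomplex on the vertices of link_Δ(v₀) is itself a face of link_Δ(v₀). -/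
/-!
The maximal proper subsets of `F ∪ {v₀}` are `F` itself and the exchanges `(F \ {u}) ∪ {v₀}` with
`u ∈ F`, which are faces by (i).  Hence the whole boundary of `F ∪ {v₀}` lies in `Δ`, and as this
set has at least `k + 1` elements, (ii) fills it in.
-/

theorem mem_of_ssubset_of_forall_erase_mem {α : Type*} [DecidableEq α] {Δ : Set (Finset α)}
    (hΔ : IsLowerSet Δ) {S T : Finset α} (hS : ∀ x ∈ S, S.erase x ∈ Δ) (hTS : T ⊂ S) : T ∈ Δ := by
  obtain ⟨x, hx, hTx⟩ := Finset.ssubset_iff_exists_subset_erase.mp hTS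
  exact hΔ hTx (hS x hx)

theorem erase_union_singleton_mem {α : Type*} [DecidableEq α] {Δ : Set (Finset α)}
    {F : Finset α} {v x : α} (hF : F ∈ Δ) (hv : v ∉ F)
    (hexchange : ∀ u ∈ F, (F \ {u}) ∪ {v} ∈ Δ) (hx : x ∈ F ∪ {v}) :
    (F ∪ {v}).erase x ∈ Δ := by
  rcases Finset.mem_union.mp hx with hxF | hxv
  · have hx_notMem : x ∉ ({v} : Finset α) :=
      Finset.notMem_singleton.mpr (ne_of_mem_of_not_mem hxF hv)
    rw [Finset.erase_union_distrib, Finset.erase_eq F, Finset.erase_eq_of_notMem hx_notMem]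
    exact hexchange x hxF
  · rw [Finset.mem_singleton.mp hxv, Finset.union_singleton, Finset.erase_insert hv]
    exact hF

theorem face_of_induced_mem_link_general {V : Type*} [DecidableEq V] {k : ℕ}
    {Δ : Set (Finset V)} (hΔ : IsLowerSet Δ) {v₀ : V}
    (hexchange : ∀ F ∈ Δ, v₀ ∉ F → ∀ u ∈ F, (F \ {u}) ∪ {v₀} ∈ Δ)
    (hfill : ∀ S : Finset V, k + 1 ≤ S.card →
      (∀ T ⊂ S, T.Nonempty → T ∈ Δ) → S ∈ Δ)
    {F : Finset V} (hF : F ∈ Δ) (hcard : k ≤ F.card) (hv : v₀ ∉ F) : F ∪ {v₀} ∈ Δ := by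
  have hfacets : ∀ x ∈ F ∪ {v₀}, (F ∪ {v₀}).erase x ∈ Δ :=
    fun _ hx => erase_union_singleton_mem hF hv (hexchange F hF hv) hx
  have hcard_union : k + 1 ≤ (F ∪ {v₀}).card := by
    rw [Finset.union_singleton, Finset.card_insert_of_notMem hv]
    exact Nat.succ_le_succ hcard
  exact hfill _ hcard_union fun T hT _ => mem_of_ssubset_of_forall_erase_mem hΔ hfacets hT

/-- Let `k ≥ 1` and let `Δ` be a simplicial complex with a vertex `v₀` such that
(i) for every face `F ∈ Δ` with `v₀ ∉ F` and every `u ∈ F`, the set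
`(F \ {u}) ∪ {v₀}` is a face of `Δ`, and (ii) every set `S` with `|S| ≥ k + 1` all of
whose proper nonempty subsets are faces of `Δ` is itself a face of `Δ`.  Then every
face `F ∈ Δ` with `|F| ≥ k` and `v₀ ∉ F`, all of whose vertices are adjacent to `v₀`
in the underlying graph of `Δ`, satisfies `F ∪ {v₀} ∈ Δ`. -/
theorem face_of_induced_mem_link {V : Type*} [Fintype V] [DecidableEq V]
    (k : ℕ) (hk : 1 ≤ k) (Δ : Finset (Finset V)) (hΔ : IsComplex Δ) (v₀ : V)
    (h1 : ∀ F ∈ Δ, v₀ ∉ F → ∀ u ∈ F, (F \ {u}) ∪ {v₀} ∈ Δ)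
    (h2 : ∀ S : Finset V, k + 1 ≤ S.card →
      (∀ T ⊂ S, T.Nonempty → T ∈ Δ) → S ∈ Δ) :
    ∀ F ∈ Δ, k ≤ F.card → v₀ ∉ F →
      (∀ w ∈ F, (underlyingGraph Δ).Adj v₀ w) → F ∪ {v₀} ∈ Δ :=
  fun _ hF hcard hv _ => face_of_induced_mem_link_general
    (Δ := ↑Δ) (fun F G hGF hF => hΔ.1 F hF G hGF) h1 h2 hF hcard hv
end
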